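/- arXiv:2408.00422 — 4 statements merged into one kernel-verified Lean document; each statement's English description precedes it below -/
import Mathlib

section
/- Let n ≥ 1 and let A ∈ ℝ^{n×n} be a symmetric matrix with nonnegative entries. For any sequence ε_k → 0⁺, the functionals GL^A_{ε_k} Γ-converge, with respect to convergence of vectors in ℝⁿ, to the graph total-variation functional F₀ defined by F₀(u) = (2/n²) Σ_{i,j=1}^n A_{ij}|u_i − u_j| if u ∈ {−1,1}ⁿ and F₀(u) = +∞ otherwise. -/
open MeasureTheory Filter
open scoped Classical

noncomputable section

/-- The double-well potential `Φ(s) = (s² − 1)²`. -/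
def Phi (s : ℝ) : ℝ := (s ^ 2 - 1) ^ 2

/-- The graph Ginzburg–Landau functional
`GL^A_ε(u) = (1/n²) Σ_{i,j} A_{ij}(u_i−u_j)² + (1/(εn)) Σ_i Φ(u_i)`. -/
def glGraph (n : ℕ) (A : Fin n → Fin n → ℝ) (ε : ℝ) (u : Fin n → ℝ) : ℝ :=
  (1 / (n : ℝ) ^ 2) * ∑ i : Fin n, ∑ j : Fin n, A i j * (u i - u j) ^ 2
    + (1 / (ε * n)) * ∑ i : Fin n, Phi (u i)

/-- The graph total-variation functional: `(2/n²) Σ_{i,j} A_{ij}|u_i − u_j|` on `{−1,1}ⁿ`,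
and `+∞` otherwise. -/
def graphTV (n : ℕ) (A : Fin n → Fin n → ℝ) (u : Fin n → ℝ) : EReal :=
  if ∀ i, u i = 1 ∨ u i = -1 then
    (((2 / (n : ℝ) ^ 2) * ∑ i : Fin n, ∑ j : Fin n, A i j * |u i - u j| : ℝ) : EReal)
  else ⊤

/-- Γ-convergence of functionals with values in `ℝ ∪ {±∞}` with respect to a notion of
sequential convergence `conv`. -/
def GammaConv {X : Type*} (conv : (ℕ → X) → X → Prop)
    (F : ℕ → X → EReal) (Flim : X → EReal) : Prop :=
  (∀ (xs : ℕ → X) (x : X), conv xs x →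
      Flim x ≤ Filter.liminf (fun n => F n (xs n)) Filter.atTop) ∧
  (∀ x : X, ∃ xs : ℕ → X, conv xs x ∧
      Filter.limsup (fun n => F n (xs n)) Filter.atTop ≤ Flim x)

/-!
Along a convergent sequence the Dirichlet term converges, while the nonnegative potential term
carries a factor tending to `+∞`, so the energies blow up unless the limit lies in `{−1, 1}ⁿ`, the
zero set of the potential. Constant sequences are recovery sequences. On `{−1, 1}ⁿ` the Dirichlet
term is the total variation, because `(a − b)² = 2 |a − b|` for `a, b ∈ {−1, 1}`.
-/

section Penalization

variable {ι X : Type*} [TopologicalSpace X] {D W : X → ℝ} {x : X}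

theorem le_liminf_comp_of_lowerSemicontinuousAt {β : Type*} [CompleteLinearOrder β] {f : X → β}
    {l : Filter ι} {xs : ι → X} (hf : LowerSemicontinuousAt f x) (hxs : Tendsto xs l (nhds x)) :
    f x ≤ liminf (fun k => f (xs k)) l := by
  rw [le_liminf_iff]
  exact fun a ha => hxs.eventually (hf a ha)

theorem lowerSemicontinuousAt_coe_ereal (hD : LowerSemicontinuousAt D x) :
    LowerSemicontinuousAt (fun y => (D y : EReal)) x :=
  continuous_coe_real_ereal.continuousAt.comp_lowerSemicontinuousAt hD
    EReal.coe_strictMono.monotone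

theorem tendsto_add_mul_atTop_of_lowerSemicontinuousAt {l : Filter ι} {xs : ι → X} {c : ι → ℝ}
    (hD : LowerSemicontinuousAt D x) (hW : LowerSemicontinuousAt W x) (hWx : 0 < W x)
    (hc : Tendsto c l atTop) (hxs : Tendsto xs l (nhds x)) :
    Tendsto (fun k => D (xs k) + c k * W (xs k)) l atTop := by
  have hD_bdd : ∀ᶠ k in l, D x - 1 ≤ D (xs k) :=
    (hxs.eventually (hD (D x - 1) (sub_one_lt _))).mono fun _ => le_of_lt
  have hW_bdd : ∀ᶠ k in l, W x / 2 ≤ W (xs k) :=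
    (hxs.eventually (hW (W x / 2) (half_lt_self hWx))).mono fun _ => le_of_lt
  have hcW : Tendsto (fun k => c k * W (xs k)) l atTop := by
    refine tendsto_atTop_mono' l ?_ (hc.atTop_mul_const (half_pos hWx))
    filter_upwards [hW_bdd, hc.eventually_ge_atTop 0] with k hWk hck
    exact mul_le_mul_of_nonneg_left hWk hck
  exact tendsto_atTop_add_left_of_le' l _ hD_bdd hcW

theorem gammaConv_add_mul_of_tendsto_atTop {c : ℕ → ℝ} (hD : LowerSemicontinuous D)
    (hW : LowerSemicontinuous W) (hW_nonneg : ∀ x, 0 ≤ W x) (hc : Tendsto c atTop atTop) :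
    GammaConv (fun xs x => Tendsto xs atTop (nhds x))
      (fun k x => ((D x + c k * W x : ℝ) : EReal))
      (fun x => if W x = 0 then (D x : EReal) else ⊤) := by
  refine ⟨fun xs x hxs => ?_, fun x => ⟨fun _ => x, tendsto_const_nhds, ?_⟩⟩
  · beta_reduce
    split_ifs with hWx
    · refine (le_liminf_comp_of_lowerSemicontinuousAt
        (lowerSemicontinuousAt_coe_ereal (hD x)) hxs).trans (liminf_le_liminf ?_)
      filter_upwards [hc.eventually_ge_atTop 0] with k hck
      exact EReal.coe_le_coe (le_add_of_nonneg_right (mul_nonneg hck (hW_nonneg _)))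
    · have hWx_pos : 0 < W x := (hW_nonneg x).lt_of_ne' hWx
      have htop := tendsto_add_mul_atTop_of_lowerSemicontinuousAt (hD x) (hW x) hWx_pos hc hxs
      exact (EReal.tendsto_coe_nhds_top_iff.2 htop).liminf_eq.ge
  · beta_reduce
    split_ifs with hWx
    · simp [hWx]
    · exact le_top

end Penalization

section DoubleWell

theorem continuous_Phi : Continuous Phi := by
  unfold Phi
  fun_prop

theorem Phi_nonneg (s : ℝ) : 0 ≤ Phi s :=
  sq_nonneg _

theorem Phi_eq_zero_iff {s : ℝ} : Phi s = 0 ↔ s = 1 ∨ s = -1 := by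
  rw [Phi, sq_eq_zero_iff, sub_eq_zero, sq_eq_one_iff]

theorem sum_Phi_eq_zero_iff {ι : Type*} [Fintype ι] {u : ι → ℝ} :
    ∑ i, Phi (u i) = 0 ↔ ∀ i, u i = 1 ∨ u i = -1 := by
  simp [Finset.sum_eq_zero_iff_of_nonneg, Phi_nonneg, Phi_eq_zero_iff]

end DoubleWell

section DirichletEnergy

variable {ι : Type*} [Fintype ι] (A : ι → ι → ℝ)

/-- The Dirichlet energy `Σ_{i,j} A_{ij}(u_i − u_j)²` of `u` on the graph with weights `A`, without
the normalization `1/n²` of `glGraph`; the sum runs over ordered pairs. -/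
def graphDirichletEnergy (u : ι → ℝ) : ℝ :=
  ∑ i, ∑ j, A i j * (u i - u j) ^ 2

theorem continuous_graphDirichletEnergy : Continuous (graphDirichletEnergy A) := by
  unfold graphDirichletEnergy
  fun_prop

theorem sq_sub_eq_two_mul_abs_sub {a b : ℝ} (ha : a = 1 ∨ a = -1) (hb : b = 1 ∨ b = -1) :
    (a - b) ^ 2 = 2 * |a - b| := by
  rcases ha with rfl | rfl <;> rcases hb with rfl | rfl <;> norm_num

theorem graphDirichletEnergy_eq_two_mul_sum_abs {u : ι → ℝ} (hu : ∀ i, u i = 1 ∨ u i = -1) :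
    graphDirichletEnergy A u = 2 * ∑ i, ∑ j, A i j * |u i - u j| := by
  simp only [graphDirichletEnergy, sq_sub_eq_two_mul_abs_sub (hu _) (hu _), Finset.mul_sum,
    mul_left_comm]

end DirichletEnergy

theorem graphTV_eq_ite (n : ℕ) (A : Fin n → Fin n → ℝ) :
    graphTV n A = fun u => if ∑ i, Phi (u i) = 0 then
      ((1 / (n : ℝ) ^ 2 * graphDirichletEnergy A u : ℝ) : EReal) else ⊤ := by
  funext u
  simp only [graphTV, sum_Phi_eq_zero_iff]
  split_ifs with hu
  · rw [graphDirichletEnergy_eq_two_mul_sum_abs A hu, ← mul_assoc, one_div_mul_eq_div]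
  · rfl

theorem graphGL_gammaConv_graphTV_general
    (n : ℕ) (hn : 1 ≤ n) (A : Fin n → Fin n → ℝ)
    (ε : ℕ → ℝ) (hεpos : ∀ k, 0 < ε k) (hε : Tendsto ε atTop (nhds 0)) :
    GammaConv (fun us u => Tendsto us atTop (nhds u))
      (fun k u => ((glGraph n A (ε k) u : ℝ) : EReal))
      (graphTV n A) := by
  have hεn_pos (k : ℕ) : 0 < ε k * n := mul_pos (hεpos k) (Nat.cast_pos.2 hn)
  have hεn : Tendsto (fun k => ε k * n) atTop (nhds 0) := by
    simpa only [zero_mul] using hε.mul_const (n : ℝ)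
  have hcoeff : Tendsto (fun k => 1 / (ε k * n)) atTop atTop := by
    simp only [one_div]
    exact (tendsto_nhdsWithin_iff.2 ⟨hεn, .of_forall hεn_pos⟩).inv_tendsto_nhdsGT_zero
  have hDirichlet : Continuous fun u => 1 / (n : ℝ) ^ 2 * graphDirichletEnergy A u :=
    (continuous_graphDirichletEnergy A).const_mul _
  have hPotential : Continuous fun u : Fin n → ℝ => ∑ i, Phi (u i) :=
    continuous_finsetSum _ fun i _ => continuous_Phi.comp (continuous_apply i)
  rw [graphTV_eq_ite]
  exact gammaConv_add_mul_of_tendsto_atTop hDirichlet.lowerSemicontinuous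
    hPotential.lowerSemicontinuous (fun u => Finset.sum_nonneg fun i _ => Phi_nonneg (u i)) hcoeff

/-- The graph Ginzburg–Landau functionals Γ-converge, as `ε → 0⁺`, to the graph
total-variation functional, with respect to convergence of vectors in `ℝⁿ`. -/
theorem graphGL_gammaConv_graphTV
    (n : ℕ) (hn : 1 ≤ n) (A : Fin n → Fin n → ℝ)
    (hsymm : ∀ i j, A i j = A j i) (hA : ∀ i j, 0 ≤ A i j)
    (ε : ℕ → ℝ) (hεpos : ∀ k, 0 < ε k) (hε : Tendsto ε atTop (nhds 0)) :
    GammaConv (fun us u => Tendsto us atTop (nhds u))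
      (fun k u => ((glGraph n A (ε k) u : ℝ) : EReal))
      (graphTV n A) :=
  graphGL_gammaConv_graphTV_general n hn A ε hεpos hε
end
end

section
/- Let W_n be the step graphons of symmetric n×n matrices with entries in [0,1], let W : (0,1)² → [0,1] be symmetric and measurable, and assume ‖W_n − W‖_□ → 0. Then the graphon total-variation functionals TV^{W_n} Γ-converge to TV^W on the set of Young measures on (0,1), with respect to narrow convergence of Young measures. -/
open MeasureTheory Filter
open scoped Classical

noncomputable section

/-- The open unit interval `(0,1)` as a subset of `ℝ`. -/
def I01 : Set ℝ := Set.Ioo 0 1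

/-- A Young measure on `(0,1)`: a measurable family of Borel probability measures on `ℝ`
(a Markov kernel from `(0,1)` to `ℝ`). -/
def IsYoungMeasure (ν : ℝ → Measure ℝ) : Prop :=
  Measurable ν ∧ ∀ x, IsProbabilityMeasure (ν x)

/-- The type of Young measures on `(0,1)`. -/
def YM := {ν : ℝ → Measure ℝ // IsYoungMeasure ν}

/-- Narrow convergence of Young measures: for every bounded continuous `f : ℝ → ℝ` and every
`g ∈ L¹((0,1))`, `∫₀¹ g(x)(∫ f dν^n_x) dx → ∫₀¹ g(x)(∫ f dν_x) dx`. -/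
def NarrowConv (ν : ℕ → ℝ → Measure ℝ) (μ : ℝ → Measure ℝ) : Prop :=
  ∀ f : ℝ → ℝ, Continuous f → (∃ C, ∀ s, |f s| ≤ C) →
    ∀ g : ℝ → ℝ, IntegrableOn g I01 →
      Tendsto (fun n => ∫ x in I01, g x * ∫ t, f t ∂(ν n x)) atTop
        (nhds (∫ x in I01, g x * ∫ t, f t ∂(μ x)))

/-- The cut norm of a kernel `V ∈ L¹((0,1)²)`. -/
def cutNorm (V : ℝ → ℝ → ℝ) : ℝ :=
  sSup {r : ℝ | ∃ f g : ℝ → ℝ, Measurable f ∧ Measurable g ∧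
    (∀ x, f x ∈ Set.Icc (-1 : ℝ) 1) ∧ (∀ x, g x ∈ Set.Icc (-1 : ℝ) 1) ∧
    r = |∫ x in I01, ∫ y in I01, V x y * f x * g y|}

/-- The index `i` with `x ∈ ((i−1)/n, i/n]`, shifted to start at `0`. -/
def stepIdx (n : ℕ) (x : ℝ) : ℕ := ⌈(n : ℝ) * x⌉₊ - 1

/-- The step graphon of an `n × n` matrix `A`: equal to `A i j` on `I_i × I_j`, where
`I_i = ((i−1)/n, i/n]`. -/
def stepGraphon (n : ℕ) (A : Fin n → Fin n → ℝ) (x y : ℝ) : ℝ :=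
  if hx : stepIdx n x < n then
    if hy : stepIdx n y < n then A ⟨stepIdx n x, hx⟩ ⟨stepIdx n y, hy⟩ else 0
  else 0

/-- The graphon total-variation functional
`TV^V(ν) = 2∫₀¹∫₀¹ V(x,y) ∫∫ |λ−μ| dν_x(λ) dν_y(μ) dx dy` if `ν_x({−1,1}) = 1` a.e.,
and `+∞` otherwise. -/
def graphonTV (V : ℝ → ℝ → ℝ) (ν : ℝ → Measure ℝ) : EReal :=
  if ∀ᵐ x ∂(volume.restrict I01), ν x ({-1, 1} : Set ℝ) = 1 then
    ((2 * ∫ x in I01, ∫ y in I01,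
        V x y * ∫ t, (∫ s, |s - t| ∂(ν x)) ∂(ν y) : ℝ) : EReal)
  else ⊤

/-!
On a measure carried by `{-1, 1}`, `|s - t| = 1 - s * t`, so on Young measures carried by `{-1, 1}`
`TV^V` is a function of the barycentre `m` of `ν` alone: twice the difference of the bilinear form
of `V` at `(1, 1)` and at `(m, m)`. Narrow convergence of `ν` gives weak-* convergence of `m`, and
an `L¹` kernel maps bounded weak-* convergent sequences to `L¹`-convergent ones, so the bilinear
form of `W` is continuous along them; cut-norm convergence replaces `W` by `W_n` uniformly over the
unit ball. Hence the finite parts converge continuously. The constraint of being carried by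
`{-1, 1}` is closed under narrow convergence, so constant recovery sequences suffice.
-/

section WeakStar

variable {α ι : Type*} [MeasurableSpace α] {μ : Measure α} {l : Filter ι}

/-- Bounded weak-* convergence in `L^∞(μ)`: convergence against every `L¹` function of a family
bounded in `L^∞`. The bound is part of the notion: along a general filter it does not follow from
convergence. -/
structure WeakStarTendsto (μ : Measure α) (f : ι → α → ℝ) (l : Filter ι) (g : α → ℝ) : Prop where
  memLp : ∀ i, MemLp (f i) ⊤ μ
  bounded : ∃ C : ℝ, ∀ i, ∀ᵐ x ∂μ, ‖f i x‖ ≤ C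
  memLp_limit : MemLp g ⊤ μ
  tendsto_integral : ∀ φ : α → ℝ, Integrable φ μ →
    Tendsto (fun i => ∫ x, φ x * f i x ∂μ) l (nhds (∫ x, φ x * g x ∂μ))

theorem weakStarTendsto_const {g : α → ℝ} (hg : MemLp g ⊤ μ) :
    WeakStarTendsto μ (fun _ : ι => g) l g where
  memLp _ := hg
  bounded := ⟨_, fun _ => ae_le_lpNorm_exponent_top hg⟩
  memLp_limit := hg
  tendsto_integral _ _ := tendsto_const_nhds

theorem norm_integral_mul_le {φ f : α → ℝ} {C : ℝ} (hφ : Integrable φ μ)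
    (hf : ∀ᵐ x ∂μ, ‖f x‖ ≤ C) : ‖∫ x, φ x * f x ∂μ‖ ≤ (∫ x, ‖φ x‖ ∂μ) * C := by
  rw [← integral_mul_const]
  refine norm_integral_le_of_norm_le (hφ.norm.mul_const C) ?_
  filter_upwards [hf] with x hx
  rw [norm_mul]
  exact mul_le_mul_of_nonneg_left hx (norm_nonneg _)

theorem WeakStarTendsto.tendsto_integral_mul {f : ι → α → ℝ} {g : α → ℝ}
    (hf : WeakStarTendsto μ f l g) {φ : ι → α → ℝ} {ψ : α → ℝ} (hφ : ∀ i, Integrable (φ i) μ)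
    (hψ : Integrable ψ μ) (hφψ : Tendsto (fun i => ∫ x, ‖φ i x - ψ x‖ ∂μ) l (nhds 0)) :
    Tendsto (fun i => ∫ x, φ i x * f i x ∂μ) l (nhds (∫ x, ψ x * g x ∂μ)) := by
  obtain ⟨C, hC⟩ := hf.bounded
  have integrable_mul {θ : α → ℝ} (hθ : Integrable θ μ) (i : ι) :
      Integrable (fun x => θ x * f i x) μ := hθ.mul_bdd (hf.memLp i).1 (hC i)
  have error_tendsto : Tendsto (fun i => ∫ x, (φ i x - ψ x) * f i x ∂μ) l (nhds 0) :=
    squeeze_zero_norm (fun i => norm_integral_mul_le ((hφ i).sub hψ) (hC i))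
      (by simpa only [zero_mul] using hφψ.mul_const C)
  have sum_tendsto := error_tendsto.add (hf.tendsto_integral ψ hψ)
  rw [zero_add] at sum_tendsto
  refine sum_tendsto.congr fun i => ?_
  rw [← integral_add (by exact integrable_mul ((hφ i).sub hψ) i) (integrable_mul hψ i)]
  simp only [sub_mul, sub_add_cancel]

end WeakStar

section KernelForm

variable {α β : Type*} [MeasurableSpace β] {ν : Measure β} {V : α → β → ℝ}

/-- The integral operator `g ↦ ∫ V(·, y) g(y) dν(y)` of a kernel `V`. -/
def kernelOp (ν : Measure β) (V : α → β → ℝ) (g : β → ℝ) (x : α) : ℝ := ∫ y, V x y * g y ∂ν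

variable [MeasurableSpace α] {μ : Measure α}

/-- The bilinear form of a kernel `V`, written as the iterated integral occurring in `cutNorm`. -/
def kernelForm (μ : Measure α) (ν : Measure β) (V : α → β → ℝ) (f : α → ℝ) (g : β → ℝ) : ℝ :=
  ∫ x, ∫ y, V x y * f x * g y ∂ν ∂μ

theorem kernelForm_eq_integral_kernelOp_mul (f : α → ℝ) (g : β → ℝ) :
    kernelForm μ ν V f g = ∫ x, kernelOp ν V g x * f x ∂μ := by
  simp only [kernelForm, kernelOp, ← integral_mul_const, mul_right_comm]

theorem integrable_kernel_mul_mul (hV : Integrable (Function.uncurry V) (μ.prod ν)) {f : α → ℝ}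
    {g : β → ℝ} (hf : MemLp f ⊤ μ) (hg : MemLp g ⊤ ν) :
    Integrable (fun p : α × β => V p.1 p.2 * f p.1 * g p.2) (μ.prod ν) :=
  (hV.mul_bdd hf.1.comp_fst <|
    Measure.quasiMeasurePreserving_fst.ae (ae_le_lpNorm_exponent_top hf)).mul_bdd hg.1.comp_snd <|
      Measure.quasiMeasurePreserving_snd.ae (ae_le_lpNorm_exponent_top hg)

variable [SFinite ν]

theorem integrable_kernelOp (hV : Integrable (Function.uncurry V) (μ.prod ν)) {g : β → ℝ}
    (hg : MemLp g ⊤ ν) : Integrable (kernelOp ν V g) μ :=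
  (hV.mul_bdd hg.1.comp_snd <|
    Measure.quasiMeasurePreserving_snd.ae (ae_le_lpNorm_exponent_top hg)).integral_prod_left

variable [SFinite μ]

theorem kernelForm_sub (hV : Integrable (Function.uncurry V) (μ.prod ν)) {W : α → β → ℝ}
    (hW : Integrable (Function.uncurry W) (μ.prod ν)) {f : α → ℝ} {g : β → ℝ}
    (hf : MemLp f ⊤ μ) (hg : MemLp g ⊤ ν) :
    kernelForm μ ν (fun x y => V x y - W x y) f g
      = kernelForm μ ν V f g - kernelForm μ ν W f g := by
  simp only [kernelForm, sub_mul]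
  exact integral_integral_sub (integrable_kernel_mul_mul hV hf hg)
    (integrable_kernel_mul_mul hW hf hg)

theorem norm_kernelForm_le (hV : Integrable (Function.uncurry V) (μ.prod ν)) {f : α → ℝ}
    {g : β → ℝ} (hf : AEStronglyMeasurable f μ) (hf₁ : ∀ᵐ x ∂μ, ‖f x‖ ≤ 1)
    (hg : AEStronglyMeasurable g ν) (hg₁ : ∀ᵐ y ∂ν, ‖g y‖ ≤ 1) :
    ‖kernelForm μ ν V f g‖ ≤ ∫ p, ‖Function.uncurry V p‖ ∂(μ.prod ν) := by
  rw [kernelForm, integral_integral (integrable_kernel_mul_mul hV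
    (memLp_top_of_bound hf 1 hf₁) (memLp_top_of_bound hg 1 hg₁))]
  refine norm_integral_le_of_norm_le hV.norm ?_
  filter_upwards [Measure.quasiMeasurePreserving_fst.ae hf₁,
    Measure.quasiMeasurePreserving_snd.ae hg₁] with p hfp hgp
  calc ‖V p.1 p.2 * f p.1 * g p.2‖ = ‖V p.1 p.2‖ * ‖f p.1‖ * ‖g p.2‖ := by
        rw [norm_mul, norm_mul]
    _ ≤ ‖V p.1 p.2‖ * 1 * 1 := by gcongr
    _ = ‖Function.uncurry V p‖ := by rw [mul_one, mul_one]; rfl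

variable {ι : Type*} {l : Filter ι} [l.IsCountablyGenerated]

theorem WeakStarTendsto.tendsto_integral_norm_kernelOp_sub {g : ι → β → ℝ} {g₀ : β → ℝ}
    (hg : WeakStarTendsto ν g l g₀) (hV : Integrable (Function.uncurry V) (μ.prod ν)) :
    Tendsto (fun i => ∫ x, ‖kernelOp ν V (g i) x - kernelOp ν V g₀ x‖ ∂μ) l (nhds 0) := by
  obtain ⟨C, hC⟩ := hg.bounded
  have integrable_op (i : ι) := integrable_kernelOp hV (hg.memLp i)
  have integrable_op₀ := integrable_kernelOp hV hg.memLp_limit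
  rw [← integral_zero α ℝ (μ := μ)]
  refine tendsto_integral_filter_of_dominated_convergence
    (fun x => (∫ y, ‖V x y‖ ∂ν) * C + ‖kernelOp ν V g₀ x‖)
    (.of_forall fun i => ((integrable_op i).sub integrable_op₀).norm.1) (.of_forall fun i => ?_)
    ((hV.integral_norm_prod_left.mul_const C).add integrable_op₀.norm) ?_
  · filter_upwards [hV.prod_right_ae] with x hx
    rw [norm_norm]
    exact (norm_sub_le _ _).trans (add_le_add_left (norm_integral_mul_le hx (hC i)) _)
  · filter_upwards [hV.prod_right_ae] with x hx
    exact tendsto_iff_norm_sub_tendsto_zero.1 (hg.tendsto_integral (V x) hx)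

theorem tendsto_kernelForm {f : ι → α → ℝ} {f₀ : α → ℝ} {g : ι → β → ℝ} {g₀ : β → ℝ}
    (hV : Integrable (Function.uncurry V) (μ.prod ν)) (hf : WeakStarTendsto μ f l f₀)
    (hg : WeakStarTendsto ν g l g₀) :
    Tendsto (fun i => kernelForm μ ν V (f i) (g i)) l (nhds (kernelForm μ ν V f₀ g₀)) := by
  simp only [kernelForm_eq_integral_kernelOp_mul]
  exact hf.tendsto_integral_mul (fun i => integrable_kernelOp hV (hg.memLp i))
    (integrable_kernelOp hV hg.memLp_limit) (hg.tendsto_integral_norm_kernelOp_sub hV)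

end KernelForm

section CutNorm

/-- Lebesgue measure on `(0,1)`. -/
abbrev volume01 : Measure ℝ := volume.restrict I01

instance isFiniteMeasure_volume01 : IsFiniteMeasure volume01 := ⟨by simp [I01]⟩

variable {V W : ℝ → ℝ → ℝ} {f g : ℝ → ℝ}

theorem abs_kernelForm_le_cutNorm (hV : Integrable (Function.uncurry V) (volume01.prod volume01))
    (hf : Measurable f) (hf₁ : ∀ x, |f x| ≤ 1) (hg : Measurable g) (hg₁ : ∀ x, |g x| ≤ 1) :
    |kernelForm volume01 volume01 V f g| ≤ cutNorm V := by
  refine le_csSup ⟨∫ p, ‖Function.uncurry V p‖ ∂(volume01.prod volume01), ?_⟩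
    ⟨f, g, hf, hg, fun x => abs_le.1 (hf₁ x), fun x => abs_le.1 (hg₁ x), rfl⟩
  rintro r ⟨u, v, hu, hv, hu₁, hv₁, rfl⟩
  exact norm_kernelForm_le hV hu.aestronglyMeasurable (.of_forall fun x => abs_le.2 (hu₁ x))
    hv.aestronglyMeasurable (.of_forall fun x => abs_le.2 (hv₁ x))

theorem tendsto_kernelForm_of_tendsto_cutNorm {ι : Type*} {l : Filter ι} [l.IsCountablyGenerated]
    {Vs : ι → ℝ → ℝ → ℝ} (hVs : ∀ i, Integrable (Function.uncurry (Vs i)) (volume01.prod volume01))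
    (hW : Integrable (Function.uncurry W) (volume01.prod volume01))
    (hcut : Tendsto (fun i => cutNorm fun x y => Vs i x y - W x y) l (nhds 0))
    {fs gs : ι → ℝ → ℝ} (hfs : ∀ i, Measurable (fs i)) (hfs₁ : ∀ i x, |fs i x| ≤ 1)
    (hgs : ∀ i, Measurable (gs i)) (hgs₁ : ∀ i x, |gs i x| ≤ 1)
    (hf : WeakStarTendsto volume01 fs l f) (hg : WeakStarTendsto volume01 gs l g) :
    Tendsto (fun i => kernelForm volume01 volume01 (Vs i) (fs i) (gs i)) l
      (nhds (kernelForm volume01 volume01 W f g)) := by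
  have diff_tendsto : Tendsto (fun i => kernelForm volume01 volume01 (Vs i) (fs i) (gs i)
      - kernelForm volume01 volume01 W (fs i) (gs i)) l (nhds 0) := by
    refine squeeze_zero_norm (fun i => ?_) hcut
    rw [← kernelForm_sub (hVs i) hW (hf.memLp i) (hg.memLp i)]
    exact abs_kernelForm_le_cutNorm ((hVs i).sub hW) (hfs i) (hfs₁ i) (hgs i) (hgs₁ i)
  simpa only [sub_add_cancel, zero_add] using diff_tendsto.add (tendsto_kernelForm hW hf hg)

end CutNorm

section StepGraphon

theorem measurable_stepIdx (n : ℕ) : Measurable (stepIdx n) :=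
  (measurable_from_top (f := fun k : ℕ => k - 1)).comp
    (Nat.measurable_ceil.comp (measurable_const_mul (n : ℝ)))

variable {n : ℕ} (A : Fin n → Fin n → ℝ)

theorem measurable_stepGraphon : Measurable (Function.uncurry (stepGraphon n A)) :=
  (measurable_of_countable fun k : ℕ × ℕ =>
    if hx : k.1 < n then if hy : k.2 < n then A ⟨k.1, hx⟩ ⟨k.2, hy⟩ else 0 else 0).comp <|
      (measurable_stepIdx n).prodMap (measurable_stepIdx n)

theorem norm_stepGraphon_le (x y : ℝ) : ‖stepGraphon n A x y‖ ≤ ‖A‖ := by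
  unfold stepGraphon
  split_ifs with hx hy
  · exact (norm_le_pi_norm (A ⟨stepIdx n x, hx⟩) _).trans (norm_le_pi_norm A _)
  · simp only [norm_zero, norm_nonneg]
  · simp only [norm_zero, norm_nonneg]

theorem integrable_stepGraphon {μ : Measure (ℝ × ℝ)} [IsFiniteMeasure μ] :
    Integrable (Function.uncurry (stepGraphon n A)) μ :=
  .of_bound (measurable_stepGraphon A).aestronglyMeasurable ‖A‖
    (.of_forall fun p => norm_stepGraphon_le A p.1 p.2)

end StepGraphon

section YoungMeasure

variable {ν : ℝ → Measure ℝ} {νs : ℕ → ℝ → Measure ℝ} {f : ℝ → ℝ}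

theorem IsYoungMeasure.measurable_integral (hν : IsYoungMeasure ν) (hf : Measurable f) :
    Measurable fun x => ∫ t, f t ∂(ν x) :=
  (hf.stronglyMeasurable.integral_kernel (κ := ⟨ν, hν.1⟩)).measurable

theorem IsYoungMeasure.abs_integral_le (hν : IsYoungMeasure ν) {C : ℝ} (hf : ∀ t, |f t| ≤ C)
    (x : ℝ) : |∫ t, f t ∂(ν x)| ≤ C := by
  have := hν.2 x
  exact (norm_integral_le_of_norm_le_const (f := f) (.of_forall hf)).trans_eq
    (by rw [probReal_univ, mul_one])

theorem IsYoungMeasure.memLp_top_integral (hν : IsYoungMeasure ν) (hf : Measurable f) {C : ℝ}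
    (hfC : ∀ t, |f t| ≤ C) {μ : Measure ℝ} : MemLp (fun x => ∫ t, f t ∂(ν x)) ⊤ μ :=
  memLp_top_of_bound (hν.measurable_integral hf).aestronglyMeasurable C
    (.of_forall (hν.abs_integral_le hfC))

theorem NarrowConv.weakStarTendsto (hconv : NarrowConv νs ν) (hνs : ∀ n, IsYoungMeasure (νs n))
    (hν : IsYoungMeasure ν) (hf : Continuous f) {C : ℝ} (hfC : ∀ t, |f t| ≤ C) :
    WeakStarTendsto volume01 (fun n x => ∫ t, f t ∂(νs n x)) atTop
      (fun x => ∫ t, f t ∂(ν x)) where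
  memLp n := (hνs n).memLp_top_integral hf.measurable hfC
  bounded := ⟨C, fun n => .of_forall ((hνs n).abs_integral_le hfC)⟩
  memLp_limit := hν.memLp_top_integral hf.measurable hfC
  tendsto_integral := hconv f hf ⟨C, hfC⟩

end YoungMeasure

section Concentration

/-- A bounded continuous function vanishing exactly on `F` when `F` is closed and nonempty; the
junk value `Metric.infDist t ∅ = 0` is why nonemptiness matters. -/
def truncDist {α : Type*} [PseudoMetricSpace α] (F : Set α) (t : α) : ℝ :=
  min 1 (Metric.infDist t F)

variable {α : Type*} [PseudoMetricSpace α] {F : Set α}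

theorem continuous_truncDist (F : Set α) : Continuous (truncDist F) :=
  continuous_const.min (Metric.continuous_infDist_pt F)

theorem truncDist_nonneg (F : Set α) (t : α) : 0 ≤ truncDist F t :=
  le_min zero_le_one Metric.infDist_nonneg

theorem abs_truncDist_le_one (F : Set α) (t : α) : |truncDist F t| ≤ 1 :=
  (abs_of_nonneg (truncDist_nonneg F t)).trans_le (min_le_left _ _)

theorem truncDist_eq_zero_iff (hF : IsClosed F) (hne : F.Nonempty) {t : α} :
    truncDist F t = 0 ↔ t ∈ F := by
  rw [hF.mem_iff_infDist_zero hne, truncDist]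
  refine ⟨fun h => ?_, fun h => by rw [h, min_eq_right zero_le_one]⟩
  exact ((min_choice _ _).resolve_left fun h' => one_ne_zero (h'.symm.trans h)).symm.trans h

theorem measure_eq_one_iff_integral_truncDist_eq_zero [MeasurableSpace α] [OpensMeasurableSpace α]
    (hF : IsClosed F) (hne : F.Nonempty) (P : Measure α) [IsProbabilityMeasure P] :
    P F = 1 ↔ ∫ t, truncDist F t ∂P = 0 := by
  have integrable_truncDist : Integrable (truncDist F) P :=
    .of_bound (continuous_truncDist F).measurable.aestronglyMeasurable 1
      (.of_forall (abs_truncDist_le_one F))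
  rw [← mem_ae_iff_prob_eq_one hF.measurableSet,
    integral_eq_zero_iff_of_nonneg (truncDist_nonneg F) integrable_truncDist]
  exact eventually_congr (.of_forall fun t => (truncDist_eq_zero_iff hF hne).symm)

/-- The Young measure `ν` is carried by `F`: `ν_x(F) = 1` for almost every `x ∈ (0,1)`. -/
def ConcentratedOn (F : Set ℝ) (ν : ℝ → Measure ℝ) : Prop := ∀ᵐ x ∂volume01, ν x F = 1

variable {F : Set ℝ} {ν : ℝ → Measure ℝ}

theorem IsYoungMeasure.concentratedOn_iff_integral_eq_zero (hν : IsYoungMeasure ν)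
    (hF : IsClosed F) (hne : F.Nonempty) :
    ConcentratedOn F ν ↔ ∫ x in I01, ∫ t, truncDist F t ∂(ν x) = 0 := by
  have integrable_defect : Integrable (fun x => ∫ t, truncDist F t ∂(ν x)) volume01 :=
    (hν.memLp_top_integral (continuous_truncDist F).measurable
      (abs_truncDist_le_one F)).integrable le_top
  rw [integral_eq_zero_iff_of_nonneg (fun x => integral_nonneg (truncDist_nonneg F))
    integrable_defect]
  refine eventually_congr (.of_forall fun x => ?_)
  have := hν.2 x
  exact measure_eq_one_iff_integral_truncDist_eq_zero hF hne (ν x)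

theorem NarrowConv.concentratedOn_of_frequently {νs : ℕ → ℝ → Measure ℝ}
    (hconv : NarrowConv νs ν) (hνs : ∀ n, IsYoungMeasure (νs n)) (hν : IsYoungMeasure ν)
    (hF : IsClosed F) (h : ∃ᶠ n in atTop, ConcentratedOn F (νs n)) :
    ConcentratedOn F ν := by
  obtain rfl | hne := F.eq_empty_or_nonempty
  · obtain ⟨n, hn⟩ := h.exists
    simpa only [ConcentratedOn, measure_empty] using hn
  have defect_tendsto := hconv (truncDist F) (continuous_truncDist F)
    ⟨1, abs_truncDist_le_one F⟩ (fun _ => 1) (integrable_const (1 : ℝ))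
  simp only [one_mul] at defect_tendsto
  refine (hν.concentratedOn_iff_integral_eq_zero hF hne).2 ?_
  exact isClosed_singleton.mem_of_frequently_of_tendsto
    (h.mono fun n => ((hνs n).concentratedOn_iff_integral_eq_zero hF hne).1) defect_tendsto

end Concentration

section Barycenter

/-- Truncation of a real number to `[-1, 1]`: a bounded continuous stand-in for the identity on
`{-1, 1}`, so that it is an admissible test function for `NarrowConv`. -/
def clip (t : ℝ) : ℝ := Set.projIcc (-1) 1 (by norm_num) t

theorem continuous_clip : Continuous clip := continuous_projIcc.subtype_val

theorem abs_clip_le_one (t : ℝ) : |clip t| ≤ 1 := abs_le.2 (Set.projIcc (-1 : ℝ) 1 _ t).2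

theorem integrable_clip (P : Measure ℝ) [IsFiniteMeasure P] : Integrable clip P :=
  .of_bound continuous_clip.measurable.aestronglyMeasurable 1 (.of_forall abs_clip_le_one)

theorem abs_sub_eq_one_sub_clip_mul_clip {s t : ℝ} (hs : s ∈ ({-1, 1} : Set ℝ))
    (ht : t ∈ ({-1, 1} : Set ℝ)) : |s - t| = 1 - clip s * clip t := by
  rcases hs with rfl | rfl <;> rcases ht with rfl | rfl <;> norm_num [clip, Set.projIcc]

theorem integral_integral_abs_sub_eq {P Q : Measure ℝ} [IsProbabilityMeasure P]
    [IsProbabilityMeasure Q] (hP : P {-1, 1} = 1) (hQ : Q {-1, 1} = 1) :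
    ∫ t, ∫ s, |s - t| ∂P ∂Q = 1 - (∫ s, clip s ∂P) * ∫ t, clip t ∂Q := by
  have measurableSet_pair : MeasurableSet ({-1, 1} : Set ℝ) := (Set.toFinite _).measurableSet
  have inner_eq {t : ℝ} (ht : t ∈ ({-1, 1} : Set ℝ)) :
      ∫ s, |s - t| ∂P = 1 - (∫ s, clip s ∂P) * clip t := by
    calc ∫ s, |s - t| ∂P = ∫ s, (1 - clip s * clip t) ∂P := by
          refine integral_congr_ae ?_
          filter_upwards [(mem_ae_iff_prob_eq_one measurableSet_pair).2 hP] with s hs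
          exact abs_sub_eq_one_sub_clip_mul_clip hs ht
      _ = 1 - (∫ s, clip s ∂P) * clip t := by
          rw [integral_sub (integrable_const _) ((integrable_clip P).mul_const _),
            integral_mul_const, integral_const, probReal_univ, one_smul]
  calc ∫ t, ∫ s, |s - t| ∂P ∂Q = ∫ t, (1 - (∫ s, clip s ∂P) * clip t) ∂Q := by
        refine integral_congr_ae ?_
        filter_upwards [(mem_ae_iff_prob_eq_one measurableSet_pair).2 hQ] with t ht
        exact inner_eq ht
    _ = 1 - (∫ s, clip s ∂P) * ∫ t, clip t ∂Q := by
        rw [integral_sub (integrable_const _) ((integrable_clip Q).const_mul _),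
          integral_const_mul, integral_const, probReal_univ, one_smul]

/-- The barycentre of `ν_x`, truncated by `clip` so that it makes sense for every Young measure. -/
def barycenter (ν : ℝ → Measure ℝ) (x : ℝ) : ℝ := ∫ t, clip t ∂(ν x)

variable {ν : ℝ → Measure ℝ}

theorem IsYoungMeasure.measurable_barycenter (hν : IsYoungMeasure ν) :
    Measurable (barycenter ν) := hν.measurable_integral continuous_clip.measurable

theorem IsYoungMeasure.abs_barycenter_le_one (hν : IsYoungMeasure ν) (x : ℝ) :
    |barycenter ν x| ≤ 1 := hν.abs_integral_le abs_clip_le_one x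

/-- The finite part of `graphonTV V`: the formula that `TV^V` takes on Young measures carried by
`{-1, 1}`, extended to all Young measures. -/
def barycenterTV (V : ℝ → ℝ → ℝ) (ν : ℝ → Measure ℝ) : ℝ :=
  2 * (kernelForm volume01 volume01 V (fun _ => 1) (fun _ => 1)
    - kernelForm volume01 volume01 V (barycenter ν) (barycenter ν))

theorem IsYoungMeasure.integral_kernel_mul_abs_sub_eq (hν : IsYoungMeasure ν) {V : ℝ → ℝ → ℝ}
    (hV : Integrable (Function.uncurry V) (volume01.prod volume01))
    (hc : ConcentratedOn {-1, 1} ν) :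
    2 * ∫ x in I01, ∫ y in I01, V x y * ∫ t, ∫ s, |s - t| ∂(ν x) ∂(ν y) = barycenterTV V ν := by
  have memLp_barycenter : MemLp (barycenter ν) ⊤ volume01 :=
    hν.memLp_top_integral continuous_clip.measurable abs_clip_le_one
  rw [barycenterTV, kernelForm, kernelForm, ← integral_integral_sub
    (integrable_kernel_mul_mul hV (memLp_top_const 1) (memLp_top_const 1))
    (integrable_kernel_mul_mul hV memLp_barycenter memLp_barycenter)]
  congr 1
  refine integral_congr_ae ?_
  filter_upwards [hc] with x hx
  refine integral_congr_ae ?_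
  filter_upwards [hc] with y hy
  have := hν.2 x
  have := hν.2 y
  rw [integral_integral_abs_sub_eq hx hy, barycenter, barycenter]
  ring

theorem IsYoungMeasure.graphonTV_eq_ite (hν : IsYoungMeasure ν) {V : ℝ → ℝ → ℝ}
    (hV : Integrable (Function.uncurry V) (volume01.prod volume01)) :
    graphonTV V ν = if ConcentratedOn {-1, 1} ν then (barycenterTV V ν : EReal) else ⊤ :=
  ite_congr rfl (fun hc => congrArg _ (hν.integral_kernel_mul_abs_sub_eq hV hc)) fun _ => rfl

theorem NarrowConv.tendsto_barycenterTV {νs : ℕ → ℝ → Measure ℝ} (hconv : NarrowConv νs ν)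
    (hνs : ∀ n, IsYoungMeasure (νs n)) (hν : IsYoungMeasure ν) {Wseq : ℕ → ℝ → ℝ → ℝ}
    (hWseq : ∀ n, Integrable (Function.uncurry (Wseq n)) (volume01.prod volume01))
    {W : ℝ → ℝ → ℝ} (hW : Integrable (Function.uncurry W) (volume01.prod volume01))
    (hcut : Tendsto (fun n => cutNorm fun x y => Wseq n x y - W x y) atTop (nhds 0)) :
    Tendsto (fun n => barycenterTV (Wseq n) (νs n)) atTop (nhds (barycenterTV W ν)) := by
  have weakStar_one : WeakStarTendsto volume01 (fun (_ : ℕ) _ => (1 : ℝ)) atTop fun _ => 1 :=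
    weakStarTendsto_const (memLp_top_const 1)
  have weakStar_barycenter :
      WeakStarTendsto volume01 (fun n => barycenter (νs n)) atTop (barycenter ν) :=
    hconv.weakStarTendsto hνs hν continuous_clip abs_clip_le_one
  have abs_one_le (_ : ℕ) (_ : ℝ) : |(1 : ℝ)| ≤ 1 := abs_one.le
  have measurable_barycenter (n : ℕ) := (hνs n).measurable_barycenter
  have abs_barycenter_le (n : ℕ) := (hνs n).abs_barycenter_le_one
  exact ((tendsto_kernelForm_of_tendsto_cutNorm hWseq hW hcut (fun _ => measurable_const)
    abs_one_le (fun _ => measurable_const) abs_one_le weakStar_one weakStar_one).sub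
    (tendsto_kernelForm_of_tendsto_cutNorm hWseq hW hcut measurable_barycenter abs_barycenter_le
      measurable_barycenter abs_barycenter_le weakStar_barycenter weakStar_barycenter)).const_mul 2

end Barycenter

theorem gammaConv_ite_top {X : Type*} {conv : (ℕ → X) → X → Prop} {p : X → Prop}
    {E : ℕ → X → EReal} {E₀ : X → EReal} (hconst : ∀ x, conv (fun _ => x) x)
    (hp : ∀ xs x, conv xs x → (∃ᶠ n in atTop, p (xs n)) → p x)
    (hE : ∀ xs x, conv xs x → Tendsto (fun n => E n (xs n)) atTop (nhds (E₀ x))) :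
    GammaConv conv (fun n x => if p x then E n x else ⊤) (fun x => if p x then E₀ x else ⊤) := by
  refine ⟨fun xs x hx => ?_, fun x => ⟨fun _ => x, hconst x, ?_⟩⟩
  · by_cases hpx : p x
    · simp only [if_pos hpx]
      rw [← (hE xs x hx).liminf_eq]
      refine liminf_le_liminf (.of_forall fun n => ?_)
      split_ifs
      exacts [le_rfl, le_top]
    · have eventually_not : ∀ᶠ n in atTop, ¬ p (xs n) :=
        not_frequently.1 fun h => hpx (hp xs x hx h)
      refine le_top.trans_eq ((tendsto_const_nhds (x := ⊤)).congr' ?_).liminf_eq.symm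
      filter_upwards [eventually_not] with n hn
      rw [if_neg hn]
  · by_cases hpx : p x
    · simp only [if_pos hpx, (hE _ x (hconst x)).limsup_eq, le_refl]
    · simp only [if_neg hpx, le_top]

theorem graphTV_gammaConv_graphonTV_general {Wseq : ℕ → ℝ → ℝ → ℝ}
    (hWseq : ∀ n, Integrable (Function.uncurry (Wseq n)) (volume01.prod volume01))
    {W : ℝ → ℝ → ℝ} (hW : Integrable (Function.uncurry W) (volume01.prod volume01))
    (hcut : Tendsto (fun n => cutNorm fun x y => Wseq n x y - W x y) atTop (nhds 0)) :
    GammaConv (fun (νs : ℕ → YM) (ν : YM) => NarrowConv (fun n => (νs n).1) ν.1)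
      (fun n ν => graphonTV (Wseq n) ν.1) (fun ν => graphonTV W ν.1) := by
  simp only [fun n (ν : YM) => ν.2.graphonTV_eq_ite (hWseq n),
    fun ν : YM => ν.2.graphonTV_eq_ite hW]
  refine gammaConv_ite_top (fun _ _ _ _ _ _ => tendsto_const_nhds)
    (fun νs ν hconv => ?_) fun νs ν hconv => ?_
  · exact hconv.concentratedOn_of_frequently (fun n => (νs n).2) ν.2
      (Set.toFinite _).isClosed
  · exact (continuous_coe_real_ereal.tendsto _).comp
      (hconv.tendsto_barycenterTV (fun n => (νs n).2) ν.2 hWseq hW hcut)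

/-- If step graphons `W_n` of symmetric `[0,1]`-valued matrices converge in cut norm to a
symmetric measurable `W : (0,1)² → [0,1]`, then `TV^{W_n}` Γ-converges to `TV^W` on the set of
Young measures with respect to narrow convergence. -/
theorem graphTV_gammaConv_graphonTV
    (Wseq : ℕ → ℝ → ℝ → ℝ)
    (hstep : ∀ n, ∃ A : Fin n → Fin n → ℝ, (∀ i j, A i j = A j i) ∧
      (∀ i j, A i j ∈ Set.Icc (0 : ℝ) 1) ∧ Wseq n = stepGraphon n A)
    (W : ℝ → ℝ → ℝ) (hWmeas : Measurable (Function.uncurry W))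
    (hWsymm : ∀ x y, W x y = W y x) (hWrange : ∀ x y, W x y ∈ Set.Icc (0 : ℝ) 1)
    (hcut : Tendsto (fun n => cutNorm (fun x y => Wseq n x y - W x y)) atTop (nhds 0)) :
    GammaConv (fun (νs : ℕ → YM) (ν : YM) => NarrowConv (fun n => (νs n).1) ν.1)
      (fun n ν => graphonTV (Wseq n) ν.1)
      (fun ν => graphonTV W ν.1) := by
  refine graphTV_gammaConv_graphonTV_general (fun n => ?_)
    (.of_mem_Icc 0 1 hWmeas.aemeasurable <| .of_forall fun p => hWrange p.1 p.2) hcut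
  obtain ⟨A, -, -, hA⟩ := hstep n
  exact hA ▸ integrable_stepGraphon A
end
end

section
/- Let V_n ∈ L¹((0,1)²) be a sequence with sup_n ‖V_n‖_{L¹} < ∞ and ‖V_n‖_□ → 0, let f : [−1,1]² → ℝ be continuous, and let u_n : (0,1) → [−1,1] be measurable functions. Then ∫₀¹∫₀¹ V_n(x,y) f(u_n(x),u_n(y)) dx dy → 0 as n → ∞. -/
/-!
The kernels `V n`, together with the maps `u n` and `v n`, define linear functionals
`F ↦ ∫∫ V n x y * F (u n x, v n y)` on the continuous functions on a compact product. The bound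
on the `L¹` norms makes them equicontinuous, so the functions along which they tend to zero form
a closed subspace. The cut norm controls them on products `F (s, t) = a s * b t`, because `a ∘ u n`
and `b ∘ v n` are admissible test functions up to scaling, and by Stone–Weierstrass the products
span a dense subspace.
-/

open MeasureTheory Filter

noncomputable section

open scoped Topology TensorProduct

section ProductFunctions

variable {X Y : Type*} [TopologicalSpace X] [CompactSpace X] [T2Space X]
  [TopologicalSpace Y] [CompactSpace Y] [T2Space Y]

theorem denseRange_tensorHom_real :
    DenseRange (ContinuousMap.tensorHom : C(X, ℝ) ⊗[ℝ] C(Y, ℝ) → C(X × Y, ℝ)) := by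
  let T : C(X, ℝ) ⊗[ℝ] C(Y, ℝ) →ₐ[ℝ] C(X × Y, ℝ) := Algebra.TensorProduct.productMap
    (ContinuousMap.compRightAlgHom ℝ ℝ .fst) (ContinuousMap.compRightAlgHom ℝ ℝ .snd)
  have tensorHom_eq : ContinuousMap.tensorHom = T.toLinearMap := by
    ext a b p
    simp [T]
  have separatesPoints : T.range.SeparatesPoints := by
    rintro ⟨x, y⟩ ⟨x', y'⟩ hne
    rcases not_and_or.1 (mt Prod.mk_inj.2 hne) with hx | hy
    · obtain ⟨a, ha, hne_a⟩ := separatesPoints_continuous_of_t35Space hx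
      exact ⟨_, ⟨_, ⟨⟨a, ha⟩ ⊗ₜ 1, rfl⟩, rfl⟩, by simpa [T] using hne_a⟩
    · obtain ⟨b, hb, hne_b⟩ := separatesPoints_continuous_of_t35Space hy
      exact ⟨_, ⟨_, ⟨1 ⊗ₜ ⟨b, hb⟩, rfl⟩, rfl⟩, by simpa [T] using hne_b⟩
  have closure_range :=
    ContinuousMap.subalgebra_topologicalClosure_eq_top_of_separatesPoints T.range separatesPoints
  rw [tensorHom_eq, DenseRange, dense_iff_closure_eq]
  simpa using congrArg SetLike.coe closure_range

theorem tendsto_zero_of_tendsto_prodMul {ι E : Type*} [NormedAddCommGroup E] [NormedSpace ℝ E]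
    {l : Filter ι} {Λ : ι → C(X × Y, ℝ) →L[ℝ] E} (hbdd : ∃ C, ∀ n, ‖Λ n‖ ≤ C)
    (hprod : ∀ (a : C(X, ℝ)) (b : C(Y, ℝ)), Tendsto (fun n => Λ n (a.prodMul b)) l (𝓝 0))
    (F : C(X × Y, ℝ)) : Tendsto (fun n => Λ n F) l (𝓝 0) := by
  have equicontinuous : Equicontinuous (fun n => ⇑(Λ n)) :=
    ((NormedSpace.equicontinuous_TFAE Λ).out 5 1).mp hbdd
  refine denseRange_tensorHom_real.induction_on F
    (equicontinuous.isClosed_setOfPred_tendsto continuous_const) fun t => ?_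
  induction t with
  | zero => simpa only [map_zero] using tendsto_const_nhds
  | tmul a b => simpa only [ContinuousMap.tensorHom_tmul] using hprod a b
  | add s t hs ht => simpa only [map_add, add_zero] using hs.add ht

end ProductFunctions

section WeightedPullback

variable {Ω K : Type*} [MeasurableSpace Ω] {μ : Measure Ω} [TopologicalSpace K] [CompactSpace K]
  [MeasurableSpace K] [OpensMeasurableSpace K] {w : Ω → ℝ} {φ : Ω → K}

theorem integrable_mul_comp (hw : Integrable w μ) (hφ : AEMeasurable φ μ)
    (F : C(K, ℝ)) : Integrable (fun ω => w ω * F (φ ω)) μ :=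
  hw.mul_bdd (F.continuous.measurable.comp_aemeasurable hφ).aestronglyMeasurable
    (.of_forall fun ω => F.norm_coe_le_norm (φ ω))

/-- The functional `F ↦ ∫ w * (F ∘ φ) ∂μ` on continuous functions on a compact space `K`, that is,
integration against the pushforward under `φ` of the signed measure with density `w`. -/
def weightedPullback (hw : Integrable w μ) (hφ : AEMeasurable φ μ) : C(K, ℝ) →L[ℝ] ℝ :=
  LinearMap.mkContinuous
    { toFun := fun F => ∫ ω, w ω * F (φ ω) ∂μ
      map_add' := fun F G => by
        simp only [ContinuousMap.add_apply, mul_add]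
        exact integral_add (integrable_mul_comp hw hφ F) (integrable_mul_comp hw hφ G)
      map_smul' := fun c F => by
        simp only [ContinuousMap.smul_apply, smul_eq_mul, mul_left_comm, integral_const_mul,
          RingHom.id_apply] }
    (∫ ω, ‖w ω‖ ∂μ) fun F => by
      rw [LinearMap.coe_mk, AddHom.coe_mk, ← integral_mul_const]
      refine norm_integral_le_of_norm_le (hw.norm.mul_const _) (.of_forall fun ω => ?_)
      rw [norm_mul]
      gcongr
      exact F.norm_coe_le_norm (φ ω)

theorem weightedPullback_apply (hw : Integrable w μ) (hφ : AEMeasurable φ μ) (F : C(K, ℝ)) :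
    weightedPullback hw hφ F = ∫ ω, w ω * F (φ ω) ∂μ :=
  rfl

theorem norm_weightedPullback_le (hw : Integrable w μ) (hφ : AEMeasurable φ μ) :
    ‖weightedPullback hw hφ‖ ≤ ∫ ω, ‖w ω‖ ∂μ :=
  LinearMap.mkContinuous_norm_le _ (integral_nonneg fun _ => norm_nonneg _) _

end WeightedPullback

section CutNorm

variable {W : ℝ → ℝ → ℝ} {a b : ℝ → ℝ}

theorem abs_integral_mul_mul_le_cutNorm
    (hW : IntegrableOn (Function.uncurry W) (I01 ×ˢ I01)) (ha : Measurable a) (hb : Measurable b)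
    (ha_mem : ∀ x, a x ∈ Set.Icc (-1 : ℝ) 1) (hb_mem : ∀ y, b y ∈ Set.Icc (-1 : ℝ) 1) :
    |∫ x in I01, ∫ y in I01, W x y * a x * b y| ≤ cutNorm W := by
  refine le_csSup ⟨∫ p in I01 ×ˢ I01, |Function.uncurry W p|, ?_⟩
    ⟨a, b, ha, hb, ha_mem, hb_mem, rfl⟩
  rintro _ ⟨f, g, hf, hg, hf_mem, hg_mem, rfl⟩
  have test_le_one (p : ℝ × ℝ) : ‖f p.1 * g p.2‖ ≤ 1 := by
    rw [norm_mul]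
    exact mul_le_one₀ (abs_le.2 (hf_mem p.1)) (norm_nonneg _) (abs_le.2 (hg_mem p.2))
  have integrable : IntegrableOn (fun p => Function.uncurry W p * (f p.1 * g p.2)) (I01 ×ˢ I01) :=
    hW.mul_bdd (by fun_prop) (.of_forall test_le_one)
  calc |∫ x in I01, ∫ y in I01, W x y * f x * g y|
      = |∫ p in I01 ×ˢ I01, Function.uncurry W p * (f p.1 * g p.2)| := by
        simp only [mul_assoc]
        exact congrArg _ (setIntegral_prod _ integrable).symm
    _ ≤ ∫ p in I01 ×ˢ I01, |Function.uncurry W p| := by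
        rw [← Real.norm_eq_abs]
        refine norm_integral_le_of_norm_le hW.abs (.of_forall fun p => ?_)
        rw [norm_mul]
        exact mul_le_of_le_one_right (norm_nonneg _) (test_le_one p)

theorem abs_integral_mul_mul_le_mul_cutNorm {A B : ℝ}
    (hW : IntegrableOn (Function.uncurry W) (I01 ×ˢ I01)) (ha : Measurable a) (hb : Measurable b)
    (haA : ∀ x, |a x| ≤ A) (hbB : ∀ y, |b y| ≤ B) :
    |∫ x in I01, ∫ y in I01, W x y * a x * b y| ≤ A * B * cutNorm W := by
  have div_mem_Icc {c : ℝ → ℝ} {C : ℝ} (h : ∀ x, |c x| ≤ C) (x : ℝ) :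
      c x / C ∈ Set.Icc (-1 : ℝ) 1 := by
    have hC : 0 ≤ C := (abs_nonneg _).trans (h x)
    rw [Set.mem_Icc, ← abs_le, abs_div, abs_of_nonneg hC]
    exact div_le_one_of_le₀ (h x) hC
  -- When `C = 0` the quotient is the junk value `0`, but then `c` vanishes too.
  have mul_div_bound {c : ℝ → ℝ} {C : ℝ} (h : ∀ x, |c x| ≤ C) (x : ℝ) : C * (c x / C) = c x :=
    mul_div_cancel_of_imp' fun hC => abs_nonpos_iff.1 ((h x).trans_eq hC)
  have rescale (x y : ℝ) : W x y * a x * b y = A * B * (W x y * (a x / A) * (b y / B)) := by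
    calc W x y * a x * b y = W x y * (A * (a x / A)) * (B * (b y / B)) := by
          rw [mul_div_bound haA, mul_div_bound hbB]
      _ = A * B * (W x y * (a x / A) * (b y / B)) := by ring
  have hA : 0 ≤ A := (abs_nonneg _).trans (haA 0)
  have hB : 0 ≤ B := (abs_nonneg _).trans (hbB 0)
  simp only [rescale, integral_const_mul, abs_mul (A * B), abs_of_nonneg (mul_nonneg hA hB)]
  gcongr
  exact abs_integral_mul_mul_le_cutNorm hW (ha.div_const A) (hb.div_const B)
    (div_mem_Icc haA) (div_mem_Icc hbB)

end CutNorm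

theorem cutNorm_to_zero_integral_to_zero_general {ι X Y : Type*}
    [TopologicalSpace X] [CompactSpace X] [T2Space X] [MeasurableSpace X] [OpensMeasurableSpace X]
    [TopologicalSpace Y] [CompactSpace Y] [T2Space Y] [MeasurableSpace Y] [OpensMeasurableSpace Y]
    [SecondCountableTopologyEither X Y] {l : Filter ι} (V : ι → ℝ → ℝ → ℝ)
    (hVint : ∀ n, IntegrableOn (Function.uncurry (V n)) (I01 ×ˢ I01))
    (hbd : ∃ C : ℝ, ∀ n, (∫ x in I01, ∫ y in I01, |V n x y|) ≤ C)
    (hcut : Tendsto (fun n => cutNorm (V n)) l (𝓝 0)) (F : C(X × Y, ℝ))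
    (u : ι → ℝ → X) (hu : ∀ n, Measurable (u n)) (v : ι → ℝ → Y) (hv : ∀ n, Measurable (v n)) :
    Tendsto (fun n => ∫ x in I01, ∫ y in I01, V n x y * F (u n x, v n y)) l (𝓝 0) := by
  have hφ (n : ι) : AEMeasurable (fun p : ℝ × ℝ => (u n p.1, v n p.2))
      (volume.restrict (I01 ×ˢ I01)) := by fun_prop
  let Λ (n : ι) : C(X × Y, ℝ) →L[ℝ] ℝ := weightedPullback (hVint n) (hφ n)
  have Λ_apply (n : ι) (G : C(X × Y, ℝ)) :
      Λ n G = ∫ x in I01, ∫ y in I01, V n x y * G (u n x, v n y) :=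
    (weightedPullback_apply (hVint n) (hφ n) G).trans
      (setIntegral_prod _ (integrable_mul_comp (hVint n) (hφ n) G))
  have norm_Λ_le (n : ι) : ‖Λ n‖ ≤ ∫ x in I01, ∫ y in I01, |V n x y| :=
    (norm_weightedPullback_le (hVint n) (hφ n)).trans_eq (setIntegral_prod _ (hVint n).norm)
  have norm_Λ_prodMul_le (a : C(X, ℝ)) (b : C(Y, ℝ)) (n : ι) :
      ‖Λ n (a.prodMul b)‖ ≤ ‖a‖ * ‖b‖ * cutNorm (V n) := by
    simp only [Λ_apply, ContinuousMap.prodMul_apply, ← mul_assoc]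
    exact abs_integral_mul_mul_le_mul_cutNorm (hVint n) (a.continuous.measurable.comp (hu n))
      (b.continuous.measurable.comp (hv n)) (fun x => a.norm_coe_le_norm (u n x))
      (fun y => b.norm_coe_le_norm (v n y))
  simp only [← Λ_apply]
  refine tendsto_zero_of_tendsto_prodMul (hbd.imp fun C hC n => (norm_Λ_le n).trans (hC n))
    (fun a b => squeeze_zero_norm (norm_Λ_prodMul_le a b) ?_) F
  simpa only [mul_zero] using hcut.const_mul (‖a‖ * ‖b‖)

/-- If `V_n` are uniformly bounded in `L¹` and `‖V_n‖_□ → 0`, then for any continuous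
`f : [−1,1]² → ℝ` and measurable `u_n : (0,1) → [−1,1]`,
`∫∫ V_n(x,y) f(u_n(x),u_n(y)) dx dy → 0`. -/
theorem cutNorm_to_zero_integral_to_zero
    (V : ℕ → ℝ → ℝ → ℝ) (hVmeas : ∀ n, Measurable (Function.uncurry (V n)))
    (hVint : ∀ n, IntegrableOn (Function.uncurry (V n)) (I01 ×ˢ I01))
    (hbd : ∃ C : ℝ, ∀ n, (∫ x in I01, ∫ y in I01, |V n x y|) ≤ C)
    (hcut : Tendsto (fun n => cutNorm (V n)) atTop (nhds 0))
    (f : ℝ × ℝ → ℝ)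
    (hf : ContinuousOn f (Set.Icc (-1 : ℝ) 1 ×ˢ Set.Icc (-1 : ℝ) 1))
    (u : ℕ → ℝ → ℝ) (hu : ∀ n, Measurable (u n))
    (hur : ∀ n x, u n x ∈ Set.Icc (-1 : ℝ) 1) :
    Tendsto (fun n => ∫ x in I01, ∫ y in I01, V n x y * f (u n x, u n y)) atTop
      (nhds 0) := by
  exact cutNorm_to_zero_integral_to_zero_general V hVint hbd hcut
    ⟨fun p : Set.Icc (-1 : ℝ) 1 × Set.Icc (-1 : ℝ) 1 => f (p.1, p.2),
      hf.comp_continuous (by fun_prop) fun p => ⟨p.1.2, p.2.2⟩⟩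
    (fun n x => ⟨u n x, hur n x⟩) (fun n => (hu n).subtype_mk)
    (fun n y => ⟨u n y, hur n y⟩) (fun n => (hu n).subtype_mk)
end
end

section
/- Let W_n, W ∈ L¹((0,1)²) be nonnegative and symmetric with sup_n ‖W_n‖_{L¹} < ∞ and ‖W_n − W‖_□ → 0, let f : ℝ² → ℝ be bounded and continuous, and let u_n : (0,1) → ℝ be measurable functions with sup_n ‖u_n‖_{L^∞} < ∞. Then: (a) the sequence of Young measures δ_{u_n} has a narrowly convergent subsequence; and (b) for every subsequence (n_k) such that δ_{u_{n_k}} converges narrowly to a Young measure ν, one has ∫₀¹∫₀¹ W_{n_k}(x,y) f(u_{n_k}(x), u_{n_k}(y)) dx dy → ∫₀¹∫₀¹ W(x,y) ∫_ℝ∫_ℝ f(λ,μ) dν_x(λ) dν_y(μ) dx dy. -/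
open MeasureTheory Filter

noncomputable section

/-- The Young measure associated with a measurable function `u`: `(δ_u)_x = δ_{u(x)}`. -/
def deltaYM (u : ℝ → ℝ) : ℝ → Measure ℝ := fun x => Measure.dirac (u x)

open ProbabilityTheory Topology BoundedContinuousFunction

/-!
For a product test function `f = φ ⊗ ψ` the energy is the bilinear pairing
`∫ W_n(x, y) a_n(x) b_n(y)` of the averages `a_n(x) = ∫ φ dν^n_x` and `b_n(y) = ∫ ψ dν^n_y`, which
converge weakly-* in `L^∞`. Replacing `W_n` by `W` costs at most `‖W_n - W‖_□ ‖φ‖ ‖ψ‖`. For the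
fixed kernel `W`, dominated convergence shows that `x ↦ ∫ W(x, y) b_n(y) dy` converges in `L¹`,
strongly enough to be paired with the weakly-* convergent `a_n`. By Stone–Weierstrass, sums of
products are uniformly dense among continuous functions on a compact square, and the uniform `L¹`
bound on `W_n` makes the error of such an approximation uniform in `n`.

For compactness, regard `ν^n` as the measure `μ ⊗ ν^n` on the graph space. These measures share the
first marginal `μ` and their second marginals live in one compact set, so they are tight. By
Prokhorov's theorem a subsequence converges weakly, and the disintegration of the limit over `μ` is
the limiting Young measure: as the first marginal stays fixed, test functions in `L¹(μ)` may be
approximated by bounded continuous ones.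
-/

lemma tendsto_of_forall_exists_dist_le {ι α : Type*} [PseudoMetricSpace α] {l : Filter ι}
    {x : ι → α} {y : α} (C : ℝ)
    (h : ∀ ε > 0, ∃ (x' : ι → α) (y' : α), Tendsto x' l (𝓝 y') ∧
      (∀ i, dist (x i) (x' i) ≤ C * ε) ∧ dist y y' ≤ C * ε) :
    Tendsto x l (𝓝 y) := by
  rw [Metric.tendsto_nhds]
  intro ε hε
  obtain ⟨x', y', hlim, hx, hy⟩ := h (ε / (3 * (|C| + 1))) (by positivity)
  have hsmall : C * (ε / (3 * (|C| + 1))) < ε / 3 := by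
    rw [← mul_div_assoc, div_lt_div_iff₀ (by positivity) (by positivity)]
    nlinarith [le_abs_self C]
  filter_upwards [Metric.tendsto_nhds.1 hlim (ε / 3) (by positivity)] with i hi
  have htri := dist_triangle4 (x i) (x' i) y' y
  rw [dist_comm y' y] at htri
  linarith [hx i]

lemma integrable_of_continuous_of_ae_mem_isCompact {G : Type*} [TopologicalSpace G] [T2Space G]
    [MeasurableSpace G] [BorelSpace G] {ρ : Measure G} [IsFiniteMeasure ρ] {f : G → ℝ}
    (hf : Continuous f) {L : Set G} (hL : IsCompact L) (hρ : ∀ᵐ p ∂ρ, p ∈ L) :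
    Integrable f ρ := by
  have := hf.continuousOn.integrableOn_compact (μ := ρ) hL
  rwa [IntegrableOn, Measure.restrict_eq_self_of_ae_mem hρ] at this

section Approximation

variable {X Y : Type*} [TopologicalSpace X] [TopologicalSpace Y]

/-- The tensor product `φ ⊗ ψ : (x, y) ↦ φ x * ψ y` of two test functions, the kind of test
function for which the energy decouples. -/
def boundedTensor (φ : X →ᵇ ℝ) (ψ : Y →ᵇ ℝ) : X × Y →ᵇ ℝ :=
  φ.compContinuous ⟨Prod.fst, continuous_fst⟩ * ψ.compContinuous ⟨Prod.snd, continuous_snd⟩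

lemma boundedTensor_apply (φ : X →ᵇ ℝ) (ψ : Y →ᵇ ℝ) (p : X × Y) :
    boundedTensor φ ψ p = φ p.1 * ψ p.2 := rfl

variable (X Y) in
/-- The products `φ ⊗ ψ` of bounded continuous functions. They are closed under multiplication, so
the algebra they generate is just their linear span. -/
def boundedTensorSubmonoid : Submonoid (X × Y →ᵇ ℝ) where
  carrier := Set.range fun p : (X →ᵇ ℝ) × (Y →ᵇ ℝ) => boundedTensor p.1 p.2
  one_mem' := ⟨1, by ext; simp [boundedTensor_apply]⟩
  mul_mem' := by
    rintro _ _ ⟨p, rfl⟩ ⟨q, rfl⟩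
    exact ⟨p * q, by ext; simp [boundedTensor_apply, mul_mul_mul_comm]⟩

lemma exists_boundedContinuousFunction_ne [T35Space X] {x y : X} (h : x ≠ y) :
    ∃ φ : X →ᵇ ℝ, φ x ≠ φ y := by
  obtain ⟨f, hf, hx, hy⟩ := CompletelyRegularSpace.completely_regular x {y} isClosed_singleton h
  refine ⟨.mkOfBound ⟨fun z => (f z : ℝ), by fun_prop⟩ 1 fun a b => ?_, ?_⟩
  · exact Real.dist_le_of_mem_Icc_01 (f a).2 (f b).2
  · simp [hx, hy rfl]

lemma separatesPoints_adjoin_boundedTensor [T35Space X] [T35Space Y] :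
    ((Algebra.adjoin ℝ (boundedTensorSubmonoid X Y : Set (X × Y →ᵇ ℝ))).map
      (toContinuousMapₐ ℝ)).SeparatesPoints := by
  have hmem (φ : X →ᵇ ℝ) (ψ : Y →ᵇ ℝ) : ⇑(boundedTensor φ ψ) ∈ (fun f : C(X × Y, ℝ) => ⇑f) ''
      ((Algebra.adjoin ℝ (boundedTensorSubmonoid X Y : Set (X × Y →ᵇ ℝ))).map
        (toContinuousMapₐ ℝ)) :=
    ⟨_, ⟨_, Algebra.subset_adjoin ⟨(φ, ψ), rfl⟩, rfl⟩, rfl⟩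
  intro p q hpq
  by_cases h₁ : p.1 = q.1
  · obtain ⟨ψ, hψ⟩ := exists_boundedContinuousFunction_ne fun h₂ => hpq (Prod.ext h₁ h₂)
    exact ⟨_, hmem 1 ψ, by simpa [boundedTensor_apply] using hψ⟩
  · obtain ⟨φ, hφ⟩ := exists_boundedContinuousFunction_ne h₁
    exact ⟨_, hmem φ 1, by simpa [boundedTensor_apply] using hφ⟩

lemma exists_mem_span_boundedTensor_abs_sub_lt [T35Space X] [T35Space Y] {f : X × Y → ℝ}
    (hf : Continuous f) {L : Set (X × Y)} (hL : IsCompact L) {ε : ℝ} (hε : 0 < ε) :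
    ∃ g ∈ Submodule.span ℝ (boundedTensorSubmonoid X Y : Set (X × Y →ᵇ ℝ)),
      ∀ p ∈ L, |f p - g p| < ε := by
  obtain ⟨_, ⟨g, hg, rfl⟩, hgf⟩ :=
    ContinuousMap.exists_mem_subalgebra_near_continuous_of_isCompact_of_separatesPoints
      separatesPoints_adjoin_boundedTensor ⟨f, hf⟩ hL hε
  refine ⟨g, ?_, fun p hp => abs_sub_comm (f p) (g p) ▸ hgf p hp⟩
  have hspan : g ∈ (Algebra.adjoin ℝ (boundedTensorSubmonoid X Y : Set _)).toSubmodule := hg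
  rwa [Algebra.adjoin_eq_span, Submonoid.closure_eq] at hspan

end Approximation

section WeakStar

variable {ι X Y : Type*} [MeasurableSpace X] [MeasurableSpace Y] {l : Filter ι}

/-- Weak-* convergence `a i ⇀ a₀` in `L^∞(μ)`, tested against `L¹(μ)`. No boundedness of the
functions is built in; where it matters, uniform bounds are separate hypotheses. -/
def TendstoWeakStar (μ : Measure X) (a : ι → X → ℝ) (l : Filter ι) (a₀ : X → ℝ) : Prop :=
  ∀ g : X → ℝ, Integrable g μ → Tendsto (fun i => ∫ x, g x * a i x ∂μ) l (𝓝 (∫ x, g x * a₀ x ∂μ))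

variable {μ : Measure X} {ν : Measure Y} {A B : ℝ} {a : ι → X → ℝ} {a₀ : X → ℝ}
  {b : ι → Y → ℝ} {b₀ : Y → ℝ}

lemma abs_integral_mul_le {h a : X → ℝ} (hh : Integrable h μ) (haA : ∀ x, |a x| ≤ A) :
    |∫ x, h x * a x ∂μ| ≤ A * ∫ x, |h x| ∂μ := by
  rw [← integral_const_mul, ← Real.norm_eq_abs]
  refine norm_integral_le_of_norm_le (hh.abs.const_mul A) (ae_of_all _ fun x => ?_)
  rw [norm_mul, mul_comm, Real.norm_eq_abs, Real.norm_eq_abs]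
  exact mul_le_mul_of_nonneg_right (haA x) (abs_nonneg _)

lemma TendstoWeakStar.tendsto_integral_mul_of_tendsto_L1 (ha : TendstoWeakStar μ a l a₀)
    (ham : ∀ i, Measurable (a i)) (haA : ∀ i x, |a i x| ≤ A)
    {h : ι → X → ℝ} {h₀ : X → ℝ} (hh : ∀ i, Integrable (h i) μ) (hh₀ : Integrable h₀ μ)
    (hL1 : Tendsto (fun i => ∫ x, |h i x - h₀ x| ∂μ) l (𝓝 0)) :
    Tendsto (fun i => ∫ x, h i x * a i x ∂μ) l (𝓝 (∫ x, h₀ x * a₀ x ∂μ)) := by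
  have hdiff : Tendsto (fun i => ∫ x, (h i x - h₀ x) * a i x ∂μ) l (𝓝 0) :=
    squeeze_zero_norm (fun i => abs_integral_mul_le ((hh i).sub hh₀) (haA i))
      (by simpa using hL1.const_mul A)
  refine (zero_add (∫ x, h₀ x * a₀ x ∂μ) ▸ hdiff.add (ha h₀ hh₀)).congr fun i => ?_
  have hint {g : X → ℝ} (hg : Integrable g μ) : Integrable (fun x => g x * a i x) μ :=
    hg.mul_bdd (ham i).aestronglyMeasurable (ae_of_all _ (haA i))
  refine (integral_add (hint ((hh i).sub hh₀)) (hint hh₀)).symm.trans ?_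
  simp only [Pi.sub_apply, sub_mul, sub_add_cancel]

/-- The average of the section `w (x, ·)` against `b`, i.e. the integral operator with kernel `w`
applied to `b`. For an integrable kernel it turns weak-* convergence into convergence in `L¹`. -/
def sectionAverage (ν : Measure Y) (w : X × Y → ℝ) (b : Y → ℝ) (x : X) : ℝ :=
  ∫ y, w (x, y) * b y ∂ν

lemma integrable_sectionAverage [SFinite μ] [SFinite ν] {w : X × Y → ℝ}
    (hw : Integrable w (μ.prod ν)) {b : Y → ℝ} (hbm : Measurable b) (hbB : ∀ y, |b y| ≤ B) :
    Integrable (sectionAverage ν w b) μ :=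
  (hw.mul_bdd (hbm.comp measurable_snd).aestronglyMeasurable
    (ae_of_all _ fun z => hbB z.2)).integral_prod_left

lemma integral_prod_mul_mul_eq_integral_sectionAverage_mul [SFinite μ] [SFinite ν] {w : X × Y → ℝ}
    (hw : Integrable w (μ.prod ν)) {a : X → ℝ} {b : Y → ℝ} (ham : Measurable a)
    (haA : ∀ x, |a x| ≤ A) (hbm : Measurable b) (hbB : ∀ y, |b y| ≤ B) :
    ∫ z, w z * (a z.1 * b z.2) ∂μ.prod ν = ∫ x, sectionAverage ν w b x * a x ∂μ := by
  have hwb : Integrable (fun z => w z * b z.2) (μ.prod ν) :=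
    hw.mul_bdd (hbm.comp measurable_snd).aestronglyMeasurable (ae_of_all _ fun z => hbB z.2)
  have hwba : Integrable (fun z => w z * b z.2 * a z.1) (μ.prod ν) :=
    hwb.mul_bdd (ham.comp measurable_fst).aestronglyMeasurable (ae_of_all _ fun z => haA z.1)
  simp_rw [mul_comm (a _), ← mul_assoc]
  rw [integral_prod _ hwba]
  simp only [integral_mul_const, sectionAverage]

lemma TendstoWeakStar.tendsto_integral_abs_sectionAverage_sub [SFinite μ] [SFinite ν]
    [l.IsCountablyGenerated] {w : X × Y → ℝ} (hw : Integrable w (μ.prod ν))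
    (hb : TendstoWeakStar ν b l b₀) (hbm : ∀ i, Measurable (b i)) (hbB : ∀ i y, |b i y| ≤ B)
    (hb₀m : Measurable b₀) (hb₀B : ∀ y, |b₀ y| ≤ B) :
    Tendsto (fun i => ∫ x, |sectionAverage ν w (b i) x - sectionAverage ν w b₀ x| ∂μ) l (𝓝 0) := by
  rw [← integral_zero X ℝ (μ := μ)]
  refine tendsto_integral_filter_of_dominated_convergence
    (fun x => 2 * (B * ∫ y, |w (x, y)| ∂ν))
    (Eventually.of_forall fun i =>
      ((integrable_sectionAverage hw (hbm i) (hbB i)).sub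
        (integrable_sectionAverage hw hb₀m hb₀B)).abs.aestronglyMeasurable)
    (Eventually.of_forall fun i => ?_) ((hw.abs.integral_prod_left.const_mul B).const_mul 2) ?_
  · filter_upwards [hw.prod_right_ae] with x hx
    have hi : |sectionAverage ν w (b i) x| ≤ B * ∫ y, |w (x, y)| ∂ν :=
      abs_integral_mul_le hx (hbB i)
    have h₀ : |sectionAverage ν w b₀ x| ≤ B * ∫ y, |w (x, y)| ∂ν := abs_integral_mul_le hx hb₀B
    rw [Real.norm_eq_abs, abs_abs]
    linarith [abs_sub (sectionAverage ν w (b i) x) (sectionAverage ν w b₀ x)]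
  · filter_upwards [hw.prod_right_ae] with x hx
    have hx_lim : Tendsto (fun i => sectionAverage ν w (b i) x) l (𝓝 (sectionAverage ν w b₀ x)) :=
      hb _ hx
    simpa using (hx_lim.sub_const (sectionAverage ν w b₀ x)).abs

lemma TendstoWeakStar.tendsto_integral_prod_mul_mul [SFinite μ] [SFinite ν]
    [l.IsCountablyGenerated] {w : X × Y → ℝ} (hw : Integrable w (μ.prod ν))
    (ha : TendstoWeakStar μ a l a₀) (ham : ∀ i, Measurable (a i)) (haA : ∀ i x, |a i x| ≤ A)
    (ha₀m : Measurable a₀) (ha₀A : ∀ x, |a₀ x| ≤ A)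
    (hb : TendstoWeakStar ν b l b₀) (hbm : ∀ i, Measurable (b i)) (hbB : ∀ i y, |b i y| ≤ B)
    (hb₀m : Measurable b₀) (hb₀B : ∀ y, |b₀ y| ≤ B) :
    Tendsto (fun i => ∫ z, w z * (a i z.1 * b i z.2) ∂μ.prod ν) l
      (𝓝 (∫ z, w z * (a₀ z.1 * b₀ z.2) ∂μ.prod ν)) := by
  simp_rw [integral_prod_mul_mul_eq_integral_sectionAverage_mul hw (ham _) (haA _) (hbm _) (hbB _),
    integral_prod_mul_mul_eq_integral_sectionAverage_mul hw ha₀m ha₀A hb₀m hb₀B]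
  exact ha.tendsto_integral_mul_of_tendsto_L1 ham haA
    (fun i => integrable_sectionAverage hw (hbm i) (hbB i)) (integrable_sectionAverage hw hb₀m hb₀B)
    (hb.tendsto_integral_abs_sectionAverage_sub hw hbm hbB hb₀m hb₀B)

end WeakStar

section CutNorm

variable {X : Type*} [MeasurableSpace X] {μ : Measure X} [SFinite μ] {V : X × X → ℝ}

/-- The cut norm of `V` on `(X, μ) × (X, μ)`, as a supremum over measurable `[-1, 1]`-valued test
functions. Integrability of `V` makes the supremum finite; otherwise it may be the junk value `0`.
-/
def kernelCutNorm (μ : Measure X) (V : X × X → ℝ) : ℝ :=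
  sSup {r : ℝ | ∃ f g : X → ℝ, Measurable f ∧ Measurable g ∧
    (∀ x, f x ∈ Set.Icc (-1 : ℝ) 1) ∧ (∀ x, g x ∈ Set.Icc (-1 : ℝ) 1) ∧
    r = |∫ x, ∫ y, V (x, y) * f x * g y ∂μ ∂μ|}

lemma integral_integral_mul_mul_eq_integral_prod (hV : Integrable V (μ.prod μ)) {a b : X → ℝ}
    {A B : ℝ} (ham : Measurable a) (haA : ∀ x, |a x| ≤ A) (hbm : Measurable b)
    (hbB : ∀ x, |b x| ≤ B) :
    ∫ x, ∫ y, V (x, y) * a x * b y ∂μ ∂μ = ∫ z, V z * (a z.1 * b z.2) ∂μ.prod μ := by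
  rw [integral_prod_mul_mul_eq_integral_sectionAverage_mul hV ham haA hbm hbB]
  simp_rw [sectionAverage, mul_right_comm _ (a _), integral_mul_const]

lemma abs_integral_integral_mul_mul_le_kernelCutNorm (hV : Integrable V (μ.prod μ)) {a b : X → ℝ}
    (ham : Measurable a) (ha : ∀ x, |a x| ≤ 1) (hbm : Measurable b) (hb : ∀ x, |b x| ≤ 1) :
    |∫ x, ∫ y, V (x, y) * a x * b y ∂μ ∂μ| ≤ kernelCutNorm μ V := by
  refine le_csSup ⟨1 * ∫ z, |V z| ∂μ.prod μ, ?_⟩ ⟨a, b, ham, hbm, fun x => abs_le.1 (ha x),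
    fun x => abs_le.1 (hb x), rfl⟩
  rintro _ ⟨f, g, hfm, hgm, hf, hg, rfl⟩
  rw [integral_integral_mul_mul_eq_integral_prod hV hfm (fun x => abs_le.2 (hf x)) hgm
    fun x => abs_le.2 (hg x)]
  refine abs_integral_mul_le hV fun z => ?_
  rw [abs_mul]
  exact mul_le_one₀ (abs_le.2 (hf z.1)) (abs_nonneg _) (abs_le.2 (hg z.2))

lemma abs_integral_prod_mul_mul_le_kernelCutNorm (hV : Integrable V (μ.prod μ)) {a b : X → ℝ}
    {A B : ℝ} (hA : 0 < A) (hB : 0 < B) (ham : Measurable a) (haA : ∀ x, |a x| ≤ A)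
    (hbm : Measurable b) (hbB : ∀ x, |b x| ≤ B) :
    |∫ z, V z * (a z.1 * b z.2) ∂μ.prod μ| ≤ A * B * kernelCutNorm μ V := by
  have hunit {c : X → ℝ} {C : ℝ} (hC : 0 < C) (hc : ∀ x, |c x| ≤ C) (x : X) : |c x / C| ≤ 1 := by
    rw [abs_div, abs_of_pos hC, div_le_one hC]
    exact hc x
  have hscaled := abs_integral_integral_mul_mul_le_kernelCutNorm hV (ham.div_const A)
    (hunit hA haA) (hbm.div_const B) (hunit hB hbB)
  rw [integral_integral_mul_mul_eq_integral_prod hV (ham.div_const A) (hunit hA haA)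
    (hbm.div_const B) (hunit hB hbB)] at hscaled
  calc |∫ z, V z * (a z.1 * b z.2) ∂μ.prod μ|
      = |A * B * ∫ z, V z * (a z.1 / A * (b z.2 / B)) ∂μ.prod μ| := by
        rw [← integral_const_mul]
        congr 2 with z
        field_simp
    _ ≤ A * B * kernelCutNorm μ V := by
        rw [abs_mul, abs_of_pos (mul_pos hA hB)]
        gcongr

lemma tendsto_integral_prod_mul_mul_of_tendsto_kernelCutNorm {ι : Type*} {l : Filter ι}
    [l.IsCountablyGenerated] {w : ι → X × X → ℝ} {w₀ : X × X → ℝ}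
    (hw : ∀ i, Integrable (w i) (μ.prod μ)) (hw₀ : Integrable w₀ (μ.prod μ))
    (hcut : Tendsto (fun i => kernelCutNorm μ (w i - w₀)) l (𝓝 0))
    {a b : ι → X → ℝ} {a₀ b₀ : X → ℝ} {A B : ℝ} (hA : 0 < A) (hB : 0 < B)
    (ha : TendstoWeakStar μ a l a₀) (ham : ∀ i, Measurable (a i)) (haA : ∀ i x, |a i x| ≤ A)
    (ha₀m : Measurable a₀) (ha₀A : ∀ x, |a₀ x| ≤ A)
    (hb : TendstoWeakStar μ b l b₀) (hbm : ∀ i, Measurable (b i)) (hbB : ∀ i y, |b i y| ≤ B)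
    (hb₀m : Measurable b₀) (hb₀B : ∀ y, |b₀ y| ≤ B) :
    Tendsto (fun i => ∫ z, w i z * (a i z.1 * b i z.2) ∂μ.prod μ) l
      (𝓝 (∫ z, w₀ z * (a₀ z.1 * b₀ z.2) ∂μ.prod μ)) := by
  have hdiff : Tendsto (fun i => ∫ z, (w i - w₀) z * (a i z.1 * b i z.2) ∂μ.prod μ) l (𝓝 0) :=
    squeeze_zero_norm (fun i => abs_integral_prod_mul_mul_le_kernelCutNorm ((hw i).sub hw₀) hA hB
      (ham i) (haA i) (hbm i) (hbB i)) (by simpa using hcut.const_mul (A * B))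
  have hfixed := ha.tendsto_integral_prod_mul_mul hw₀ ham haA ha₀m ha₀A hb hbm hbB hb₀m hb₀B
  refine (zero_add (∫ z, w₀ z * (a₀ z.1 * b₀ z.2) ∂μ.prod μ) ▸ hdiff.add hfixed).congr fun i => ?_
  have hint {v : X × X → ℝ} (hv : Integrable v (μ.prod μ)) :
      Integrable (fun z => v z * (a i z.1 * b i z.2)) (μ.prod μ) := by
    refine hv.mul_bdd (c := A * B) ?_ (ae_of_all _ fun z => ?_)
    · exact (((ham i).comp measurable_fst).mul ((hbm i).comp measurable_snd)).aestronglyMeasurable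
    · rw [norm_mul]
      exact mul_le_mul (haA i _) (hbB i _) (norm_nonneg _) hA.le
  rw [← integral_add (hint ((hw i).sub hw₀)) (hint hw₀)]
  simp only [Pi.sub_apply, sub_mul, sub_add_cancel]

end CutNorm

section YoungPairing

variable {Z G : Type*} [MeasurableSpace Z] [MeasurableSpace G] {m : Measure Z} {w : Z → ℝ}
  {η : Kernel Z G}

/-- The pairing of an integrable weight `w` and a test function `f` with the Young measure `η` over
`(Z, m)`. The energy of a Young measure `κ` is the pairing with its square `κ ∥ₖ κ` over
`μ.prod μ`. -/
def youngPairing (m : Measure Z) (w : Z → ℝ) (η : Kernel Z G) (f : G → ℝ) : ℝ :=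
  ∫ z, w z * ∫ p, f p ∂η z ∂m

lemma youngPairing_smul (c : ℝ) (f : G → ℝ) :
    youngPairing m w η (c • f) = c * youngPairing m w η f := by
  simp only [youngPairing, Pi.smul_apply, smul_eq_mul, integral_const_mul, mul_left_comm _ c]

lemma abs_integral_le_of_ae_abs_le {ρ : Measure G} [IsProbabilityMeasure ρ] {f : G → ℝ} {C : ℝ}
    (hf : ∀ᵐ p ∂ρ, |f p| ≤ C) : |∫ p, f p ∂ρ| ≤ C := by
  simpa using norm_integral_le_of_norm_le_const (f := f) hf

variable [IsMarkovKernel η]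

lemma integrable_mul_integral_kernel (hw : Integrable w m) {f : G → ℝ}
    (hf : StronglyMeasurable f) {C : ℝ} (hfC : ∀ᵐ z ∂m, ∀ᵐ p ∂η z, |f p| ≤ C) :
    Integrable (fun z => w z * ∫ p, f p ∂η z) m :=
  hw.mul_bdd hf.integral_kernel.aestronglyMeasurable
    (hfC.mono fun _ hz => abs_integral_le_of_ae_abs_le hz)

variable [TopologicalSpace G] [BorelSpace G] {L : Set G} {f g : G → ℝ}

lemma integrable_mul_integral_kernel_of_ae_mem_isCompact (hw : Integrable w m)
    (hL : IsCompact L) (hη : ∀ᵐ z ∂m, ∀ᵐ p ∂η z, p ∈ L) (hf : Continuous f) :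
    Integrable (fun z => w z * ∫ p, f p ∂η z) m := by
  obtain ⟨C, hC⟩ := hL.exists_bound_of_continuousOn hf.continuousOn
  exact integrable_mul_integral_kernel hw hf.stronglyMeasurable
    (hη.mono fun z hz => hz.mono hC)

variable [T2Space G]

lemma youngPairing_add (hw : Integrable w m) (hL : IsCompact L)
    (hη : ∀ᵐ z ∂m, ∀ᵐ p ∂η z, p ∈ L) (hf : Continuous f) (hg : Continuous g) :
    youngPairing m w η (f + g) = youngPairing m w η f + youngPairing m w η g := by
  refine (integral_congr_ae ?_).trans
    (integral_add (integrable_mul_integral_kernel_of_ae_mem_isCompact hw hL hη hf)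
      (integrable_mul_integral_kernel_of_ae_mem_isCompact hw hL hη hg))
  filter_upwards [hη] with z hz
  rw [← mul_add, ← integral_add (integrable_of_continuous_of_ae_mem_isCompact hf hL hz)
    (integrable_of_continuous_of_ae_mem_isCompact hg hL hz)]
  rfl

lemma abs_youngPairing_sub_le (hw : Integrable w m) (hL : IsCompact L)
    (hη : ∀ᵐ z ∂m, ∀ᵐ p ∂η z, p ∈ L) (hf : Continuous f) (hg : Continuous g) {ε : ℝ}
    (hfg : ∀ p ∈ L, |f p - g p| ≤ ε) :
    |youngPairing m w η f - youngPairing m w η g| ≤ ε * ∫ z, |w z| ∂m := by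
  rw [youngPairing, youngPairing,
    ← integral_sub (integrable_mul_integral_kernel_of_ae_mem_isCompact hw hL hη hf)
      (integrable_mul_integral_kernel_of_ae_mem_isCompact hw hL hη hg),
    ← integral_const_mul, ← Real.norm_eq_abs]
  refine norm_integral_le_of_norm_le (hw.abs.const_mul ε) ?_
  filter_upwards [hη] with z hz
  rw [← mul_sub, ← integral_sub (integrable_of_continuous_of_ae_mem_isCompact hf hL hz)
    (integrable_of_continuous_of_ae_mem_isCompact hg hL hz), norm_mul, mul_comm ε]
  exact mul_le_mul_of_nonneg_left (abs_integral_le_of_ae_abs_le (hz.mono hfg)) (norm_nonneg _)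

end YoungPairing

section Narrow

variable {ι X E : Type*} [MeasurableSpace X] {μ : Measure X} [TopologicalSpace E]
  [MeasurableSpace E] {κ : ι → Kernel X E} {l : Filter ι} {κ₀ : Kernel X E}

/-- Narrow convergence of Young measures over `(X, μ)`, encoded as kernels: the averages of every
bounded continuous function converge weakly-* in `L^∞(μ)`. -/
def TendstoNarrowly (μ : Measure X) (κ : ι → Kernel X E) (l : Filter ι) (κ₀ : Kernel X E) : Prop :=
  ∀ f : E → ℝ, Continuous f → (∃ C, ∀ s, |f s| ≤ C) →
    TendstoWeakStar μ (fun i x => ∫ t, f t ∂κ i x) l (fun x => ∫ t, f t ∂κ₀ x)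

lemma TendstoNarrowly.ae_ae_mem [PerfectlyNormalSpace E] [OpensMeasurableSpace E]
    [IsFiniteMeasure μ] [IsMarkovKernel κ₀] [l.NeBot] (h : TendstoNarrowly μ κ l κ₀) {K : Set E}
    (hK : IsClosed K) (hκ : ∀ i, ∀ᵐ x ∂μ, ∀ᵐ t ∂κ i x, t ∈ K) :
    ∀ᵐ x ∂μ, ∀ᵐ t ∂κ₀ x, t ∈ K := by
  obtain ⟨d, hdK, hd⟩ :=
    perfectlyNormalSpace_iff_forall_isClosed_preimage_zero.1 ‹PerfectlyNormalSpace E› K hK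
  have hd0 (t : E) : 0 ≤ d t := (hd t).1
  have hd1 (t : E) : |d t| ≤ 1 := (abs_of_nonneg (hd0 t)).trans_le (hd t).2
  have hlim : ∫ x, ∫ t, d t ∂κ₀ x ∂μ = 0 := by
    refine tendsto_nhds_unique
      (by simpa using h d d.continuous ⟨1, hd1⟩ (fun _ => 1) (integrable_const 1))
      (tendsto_const_nhds.congr fun i => (integral_eq_zero_of_ae ?_).symm)
    filter_upwards [hκ i] with x hx
    exact integral_eq_zero_of_ae (hx.mono fun t ht => hdK.le ht)
  have hint : Integrable (fun x => ∫ t, d t ∂κ₀ x) μ := by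
    simpa using integrable_mul_integral_kernel (η := κ₀) (integrable_const (1 : ℝ) (μ := μ))
      d.continuous.stronglyMeasurable (ae_of_all _ fun x => ae_of_all _ hd1)
  filter_upwards [(integral_eq_zero_iff_of_nonneg (fun x => integral_nonneg hd0) hint).1 hlim]
    with x hx
  have hdint : Integrable d (κ₀ x) :=
    (integrable_const (1 : ℝ)).mono' d.continuous.aestronglyMeasurable (ae_of_all _ hd1)
  exact ((integral_eq_zero_iff_of_nonneg hd0 hdint).1 hx).mono fun t ht => hdK.ge ht

end Narrow

section Product

variable {X Y E F : Type*} [MeasurableSpace X] [MeasurableSpace Y] [MeasurableSpace E]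
  [MeasurableSpace F] {μ : Measure X} {ν : Measure Y} {κ : Kernel X E}
  [IsMarkovKernel κ] {η : Kernel Y F} [IsMarkovKernel η] {K : Set E} {L : Set F}

lemma ae_ae_parallelComp_mem_prod (hκ : ∀ᵐ x ∂μ, ∀ᵐ t ∂κ x, t ∈ K)
    (hη : ∀ᵐ y ∂ν, ∀ᵐ s ∂η y, s ∈ L) :
    ∀ᵐ z ∂μ.prod ν, ∀ᵐ p ∂(κ ∥ₖ η) z, p ∈ K ×ˢ L := by
  filter_upwards [Measure.quasiMeasurePreserving_fst.ae hκ,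
    Measure.quasiMeasurePreserving_snd.ae hη] with z h₁ h₂
  rw [Kernel.parallelComp_apply]
  filter_upwards [Measure.quasiMeasurePreserving_fst.ae h₁,
    Measure.quasiMeasurePreserving_snd.ae h₂] with p hp₁ hp₂
  exact ⟨hp₁, hp₂⟩

lemma youngPairing_boundedTensor [TopologicalSpace E] [TopologicalSpace F] (w : X × Y → ℝ)
    (φ : E →ᵇ ℝ) (ψ : F →ᵇ ℝ) :
    youngPairing (μ.prod ν) w (κ ∥ₖ η) (boundedTensor φ ψ) =
      ∫ z, w z * ((∫ t, φ t ∂κ z.1) * ∫ s, ψ s ∂η z.2) ∂μ.prod ν := by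
  simp only [youngPairing, Kernel.parallelComp_apply, boundedTensor_apply, integral_prod_mul]

lemma youngPairing_uncurry_eq_iteratedIntegral [SFinite μ] [SFinite ν]
    [TopologicalSpace E] [TopologicalSpace F] [T2Space E] [T2Space F] [SecondCountableTopology E]
    [SecondCountableTopology F] [BorelSpace E] [BorelSpace F] {W : X → Y → ℝ}
    (hW : Integrable W.uncurry (μ.prod ν)) {f : E → F → ℝ} (hf : Continuous f.uncurry)
    (hK : IsCompact K) (hL : IsCompact L) (hκ : ∀ᵐ x ∂μ, ∀ᵐ t ∂κ x, t ∈ K)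
    (hη : ∀ᵐ y ∂ν, ∀ᵐ s ∂η y, s ∈ L) :
    youngPairing (μ.prod ν) W.uncurry (κ ∥ₖ η) f.uncurry =
      ∫ x, ∫ y, W x y * ∫ s, ∫ t, f t s ∂κ x ∂η y ∂ν ∂μ := by
  have hsupp := ae_ae_parallelComp_mem_prod hκ hη
  rw [youngPairing, integral_prod _
    (integrable_mul_integral_kernel_of_ae_mem_isCompact hW (hK.prod hL) hsupp hf)]
  refine integral_congr_ae ((Measure.ae_ae_of_ae_prod hsupp).mono fun x hx => ?_)
  refine integral_congr_ae (hx.mono fun y hxy => ?_)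
  have hint := integrable_of_continuous_of_ae_mem_isCompact hf (hK.prod hL) hxy
  rw [Kernel.parallelComp_apply] at hint
  simp only [Kernel.parallelComp_apply, integral_prod_symm _ hint, Function.uncurry_apply_pair]

end Product

section EnergyConvergence

variable {ι X E : Type*} [MeasurableSpace X] {μ : Measure X} [SFinite μ] [TopologicalSpace E]
  [MeasurableSpace E] [BorelSpace E] {l : Filter ι} [l.IsCountablyGenerated]
  {w : ι → X × X → ℝ} {w₀ : X × X → ℝ} {κ : ι → Kernel X E} {κ₀ : Kernel X E}
  [∀ i, IsMarkovKernel (κ i)] [IsMarkovKernel κ₀] {K : Set E}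

lemma TendstoNarrowly.tendsto_youngPairing_boundedTensor (hκ : TendstoNarrowly μ κ l κ₀)
    (hw : ∀ i, Integrable (w i) (μ.prod μ)) (hw₀ : Integrable w₀ (μ.prod μ))
    (hcut : Tendsto (fun i => kernelCutNorm μ (w i - w₀)) l (𝓝 0)) (φ ψ : E →ᵇ ℝ) :
    Tendsto (fun i => youngPairing (μ.prod μ) (w i) (κ i ∥ₖ κ i) (boundedTensor φ ψ)) l
      (𝓝 (youngPairing (μ.prod μ) w₀ (κ₀ ∥ₖ κ₀) (boundedTensor φ ψ))) := by
  have hlim (χ : E →ᵇ ℝ) := hκ χ χ.continuous ⟨‖χ‖, χ.norm_coe_le_norm⟩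
  have hmeas (χ : E →ᵇ ℝ) (η : Kernel X E) : Measurable fun x => ∫ t, χ t ∂η x :=
    χ.continuous.stronglyMeasurable.integral_kernel.measurable
  have hbound (χ : E →ᵇ ℝ) (η : Kernel X E) [IsMarkovKernel η] (x : X) :
      |∫ t, χ t ∂η x| ≤ ‖χ‖ + 1 :=
    abs_integral_le_of_ae_abs_le (ae_of_all _ fun t => (χ.norm_coe_le_norm t).trans (by simp))
  simp only [youngPairing_boundedTensor]
  exact tendsto_integral_prod_mul_mul_of_tendsto_kernelCutNorm hw hw₀ hcut
    (by positivity) (by positivity)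
    (hlim φ) (fun i => hmeas φ (κ i)) (fun i => hbound φ (κ i)) (hmeas φ κ₀) (hbound φ κ₀)
    (hlim ψ) (fun i => hmeas ψ (κ i)) (fun i => hbound ψ (κ i)) (hmeas ψ κ₀) (hbound ψ κ₀)

variable [SecondCountableTopology E]

lemma TendstoNarrowly.tendsto_youngPairing_of_mem_span [T2Space E] (hκ : TendstoNarrowly μ κ l κ₀)
    (hw : ∀ i, Integrable (w i) (μ.prod μ)) (hw₀ : Integrable w₀ (μ.prod μ))
    (hcut : Tendsto (fun i => kernelCutNorm μ (w i - w₀)) l (𝓝 0)) (hK : IsCompact K)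
    (hκK : ∀ i, ∀ᵐ x ∂μ, ∀ᵐ t ∂κ i x, t ∈ K) (hκ₀K : ∀ᵐ x ∂μ, ∀ᵐ t ∂κ₀ x, t ∈ K)
    {g : E × E →ᵇ ℝ}
    (hg : g ∈ Submodule.span ℝ (boundedTensorSubmonoid E E : Set (E × E →ᵇ ℝ))) :
    Tendsto (fun i => youngPairing (μ.prod μ) (w i) (κ i ∥ₖ κ i) g) l
      (𝓝 (youngPairing (μ.prod μ) w₀ (κ₀ ∥ₖ κ₀) g)) := by
  induction hg using Submodule.span_induction with
  | mem g hg =>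
    obtain ⟨⟨φ, ψ⟩, rfl⟩ := hg
    exact hκ.tendsto_youngPairing_boundedTensor hw hw₀ hcut φ ψ
  | zero => simp [youngPairing, tendsto_const_nhds]
  | add g h _ _ hg hh =>
    have hadd {v : X × X → ℝ} (hv : Integrable v (μ.prod μ)) {η : Kernel X E} [IsMarkovKernel η]
        (hη : ∀ᵐ x ∂μ, ∀ᵐ t ∂η x, t ∈ K) :
        youngPairing (μ.prod μ) v (η ∥ₖ η) ⇑(g + h) =
          youngPairing (μ.prod μ) v (η ∥ₖ η) g + youngPairing (μ.prod μ) v (η ∥ₖ η) h :=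
      youngPairing_add hv (hK.prod hK) (ae_ae_parallelComp_mem_prod hη hη) g.continuous
        h.continuous
    simpa only [hadd (hw _) (hκK _), hadd hw₀ hκ₀K] using hg.add hh
  | smul c g _ hg =>
    have hcoe : ⇑(c • g) = c • ⇑g := rfl
    simpa only [hcoe, youngPairing_smul] using hg.const_mul c

lemma TendstoNarrowly.tendsto_youngPairing [T35Space E] (hκ : TendstoNarrowly μ κ l κ₀)
    (hw : ∀ i, Integrable (w i) (μ.prod μ)) {M : ℝ} (hM : ∀ i, ∫ z, |w i z| ∂μ.prod μ ≤ M)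
    (hw₀ : Integrable w₀ (μ.prod μ))
    (hcut : Tendsto (fun i => kernelCutNorm μ (w i - w₀)) l (𝓝 0)) (hK : IsCompact K)
    (hκK : ∀ i, ∀ᵐ x ∂μ, ∀ᵐ t ∂κ i x, t ∈ K) (hκ₀K : ∀ᵐ x ∂μ, ∀ᵐ t ∂κ₀ x, t ∈ K)
    {f : E × E → ℝ} (hf : Continuous f) :
    Tendsto (fun i => youngPairing (μ.prod μ) (w i) (κ i ∥ₖ κ i) f) l
      (𝓝 (youngPairing (μ.prod μ) w₀ (κ₀ ∥ₖ κ₀) f)) := by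
  refine tendsto_of_forall_exists_dist_le (max M (∫ z, |w₀ z| ∂μ.prod μ)) fun ε hε => ?_
  obtain ⟨g, hgspan, hfg⟩ := exists_mem_span_boundedTensor_abs_sub_lt hf (hK.prod hK) hε
  have hclose {v : X × X → ℝ} (hv : Integrable v (μ.prod μ)) {η : Kernel X E} [IsMarkovKernel η]
      (hη : ∀ᵐ x ∂μ, ∀ᵐ t ∂η x, t ∈ K)
      (hvM : ∫ z, |v z| ∂μ.prod μ ≤ max M (∫ z, |w₀ z| ∂μ.prod μ)) :
      dist (youngPairing (μ.prod μ) v (η ∥ₖ η) f) (youngPairing (μ.prod μ) v (η ∥ₖ η) g) ≤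
        max M (∫ z, |w₀ z| ∂μ.prod μ) * ε := by
    rw [mul_comm]
    exact (abs_youngPairing_sub_le hv (hK.prod hK) (ae_ae_parallelComp_mem_prod hη hη) hf
      g.continuous fun p hp => (hfg p hp).le).trans (mul_le_mul_of_nonneg_left hvM hε.le)
  exact ⟨_, _, hκ.tendsto_youngPairing_of_mem_span hw hw₀ hcut hK hκK hκ₀K hgspan,
    fun i => hclose (hw i) (hκK i) ((hM i).trans (le_max_left _ _)),
    hclose hw₀ hκ₀K (le_max_right _ _)⟩

end EnergyConvergence

section Compactness

variable {ι X E : Type*} [MeasurableSpace X] [MeasurableSpace E] {μ : Measure X} {l : Filter ι}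

lemma integrable_comp_fst_of_fst_eq {ρ : Measure (X × E)} (hρ : ρ.fst = μ) {g : X → ℝ}
    (hg : Integrable g μ) : Integrable (fun z => g z.1) ρ := by
  subst hρ
  exact hg.comp_measurable measurable_fst

lemma integral_comp_fst_of_fst_eq {ρ : Measure (X × E)} (hρ : ρ.fst = μ) {g : X → ℝ}
    (hg : AEStronglyMeasurable g μ) : ∫ z, g z.1 ∂ρ = ∫ x, g x ∂μ := by
  subst hρ
  exact (integral_map measurable_fst.aemeasurable hg).symm

variable [TopologicalSpace E]

lemma integrable_fst_mul_snd [OpensMeasurableSpace E] {ρ : Measure (X × E)} (hρ : ρ.fst = μ)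
    {g : X → ℝ} (hg : Integrable g μ) (f : E →ᵇ ℝ) : Integrable (fun z => g z.1 * f z.2) ρ :=
  (integrable_comp_fst_of_fst_eq hρ hg).mul_bdd
    (f.continuous.measurable.comp measurable_snd).aestronglyMeasurable
    (ae_of_all _ fun z => f.norm_coe_le_norm z.2)

lemma youngPairing_eq_integral_compProd [OpensMeasurableSpace E] [SFinite μ] {κ : Kernel X E}
    [IsMarkovKernel κ] {g : X → ℝ} (hg : Integrable g μ) (f : E →ᵇ ℝ) :
    youngPairing μ g κ f = ∫ z, g z.1 * f z.2 ∂(μ ⊗ₘ κ) := by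
  rw [Measure.integral_compProd (integrable_fst_mul_snd (Measure.fst_compProd μ κ) hg f)]
  simp only [youngPairing, integral_const_mul]

lemma isTightMeasureSet_range_compProd [TopologicalSpace X] [T2Space E] [OpensMeasurableSpace E]
    [SFinite μ] (hμ : IsTightMeasureSet {μ}) {κ : ι → Kernel X E} [∀ i, IsMarkovKernel (κ i)]
    {K : Set E} (hK : IsCompact K) (hκK : ∀ i, ∀ᵐ x ∂μ, ∀ᵐ t ∂κ i x, t ∈ K) :
    IsTightMeasureSet (Set.range fun i => μ ⊗ₘ κ i) := by
  refine .prodMk (hμ.subset ?_) ?_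
  · rintro _ ⟨_, ⟨i, rfl⟩, rfl⟩
    exact Measure.fst_compProd μ (κ i)
  · refine isTightMeasureSet_iff_exists_isCompact_measure_compl_le.2 fun ε _ => ⟨K, hK, ?_⟩
    rintro _ ⟨_, ⟨i, rfl⟩, rfl⟩
    rw [Measure.snd_compProd]
    exact (Measure.ae_comp_of_ae_ae hK.measurableSet (hκK i)).le.trans zero_le

lemma tendsto_integral_fst_mul_snd_of_fst_eq [TopologicalSpace X] [NormalSpace X] [BorelSpace X]
    [OpensMeasurableSpace E] [OpensMeasurableSpace (X × E)] [μ.WeaklyRegular]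
    {ρ : ι → ProbabilityMeasure (X × E)} {ρ₀ : ProbabilityMeasure (X × E)}
    (hlim : Tendsto ρ l (𝓝 ρ₀)) (hρ : ∀ i, (ρ i : Measure (X × E)).fst = μ)
    (hρ₀ : (ρ₀ : Measure (X × E)).fst = μ) {g : X → ℝ} (hg : Integrable g μ) (f : E →ᵇ ℝ) :
    Tendsto (fun i => ∫ z, g z.1 * f z.2 ∂(ρ i : Measure (X × E))) l
      (𝓝 (∫ z, g z.1 * f z.2 ∂(ρ₀ : Measure (X × E)))) := by
  refine tendsto_of_forall_exists_dist_le ‖f‖ fun ε hε => ?_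
  obtain ⟨φ, hφε, hφ⟩ := hg.exists_boundedContinuous_integral_sub_le hε
  have hclose {σ : Measure (X × E)} (hσ : σ.fst = μ) :
      dist (∫ z, g z.1 * f z.2 ∂σ) (∫ z, boundedTensor φ f z ∂σ) ≤ ‖f‖ * ε := by
    simp only [boundedTensor_apply]
    rw [Real.dist_eq, ← integral_sub (integrable_fst_mul_snd hσ hg f)
      (integrable_fst_mul_snd hσ hφ f)]
    simp only [← sub_mul]
    refine (abs_integral_mul_le (integrable_comp_fst_of_fst_eq hσ (hg.sub hφ))
      fun z => f.norm_coe_le_norm z.2).trans ?_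
    rw [integral_comp_fst_of_fst_eq hσ (hg.sub hφ).abs.aestronglyMeasurable]
    exact mul_le_mul_of_nonneg_left hφε (norm_nonneg f)
  exact ⟨_, _, ProbabilityMeasure.tendsto_iff_forall_integral_tendsto.1 hlim (boundedTensor φ f),
    fun i => hclose (hρ i), hclose hρ₀⟩

lemma fst_eq_of_tendsto [TopologicalSpace X] [BorelSpace X] [HasOuterApproxClosed X]
    [OpensMeasurableSpace (X × E)] [l.NeBot] {ρ : ι → ProbabilityMeasure (X × E)}
    {ρ₀ : ProbabilityMeasure (X × E)} (hlim : Tendsto ρ l (𝓝 ρ₀))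
    (hρ : ∀ i, (ρ i : Measure (X × E)).fst = μ) : (ρ₀ : Measure (X × E)).fst = μ := by
  obtain ⟨i⟩ := l.nonempty_of_neBot
  have hmap := ProbabilityMeasure.tendsto_map_of_tendsto_of_continuous ρ ρ₀ hlim continuous_fst
  have hconst (j : ι) : (ρ j).map continuous_fst.measurable.aemeasurable =
      (ρ i).map continuous_fst.measurable.aemeasurable := Subtype.ext ((hρ j).trans (hρ i).symm)
  simp only [hconst] at hmap
  rw [← hρ i]
  exact congrArg ProbabilityMeasure.toMeasure (tendsto_nhds_unique hmap tendsto_const_nhds)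

end Compactness

lemma exists_subseq_tendstoNarrowly {X E : Type*} [MeasurableSpace X] [StandardBorelSpace X]
    {μ : Measure X} [IsProbabilityMeasure μ] [TopologicalSpace E] [PolishSpace E]
    [MeasurableSpace E] [BorelSpace E] {κ : ℕ → Kernel X E} [∀ n, IsMarkovKernel (κ n)]
    {K : Set E} (hK : IsCompact K) (hκK : ∀ n, ∀ᵐ x ∂μ, ∀ᵐ t ∂κ n x, t ∈ K) :
    ∃ φ : ℕ → ℕ, StrictMono φ ∧ ∃ κ₀ : Kernel X E, IsMarkovKernel κ₀ ∧
      TendstoNarrowly μ (fun k => κ (φ k)) atTop κ₀ := by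
  let := upgradeStandardBorel X
  have : Nonempty E := by
    obtain ⟨x, hx⟩ := (hκK 0).exists
    exact hx.exists.nonempty
  let ρ (n : ℕ) : ProbabilityMeasure (X × E) := ⟨μ ⊗ₘ κ n, inferInstance⟩
  have htight := isTightMeasureSet_range_compProd (μ := μ) isTightMeasureSet_singleton hK hκK
  have hcompact : IsCompact (closure (Set.range ρ)) :=
    isCompact_closure_of_isTightMeasureSet (htight.subset <| by
      rintro _ ⟨_, ⟨n, rfl⟩, rfl⟩
      exact ⟨n, rfl⟩)
  obtain ⟨ρ₀, -, φ, hφ, hlim⟩ :=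
    hcompact.isSeqCompact fun n => subset_closure (Set.mem_range_self n)
  have hfst (k : ℕ) : (ρ (φ k) : Measure (X × E)).fst = μ := Measure.fst_compProd μ (κ (φ k))
  have hfst₀ : (ρ₀ : Measure (X × E)).fst = μ := fst_eq_of_tendsto hlim hfst
  refine ⟨φ, hφ, (ρ₀ : Measure (X × E)).condKernel, inferInstance, fun f hf hfC g hg => ?_⟩
  obtain ⟨C, hC⟩ := hfC
  let f' : E →ᵇ ℝ := .ofNormedAddCommGroup f hf C hC
  have hlim' := tendsto_integral_fst_mul_snd_of_fst_eq hlim hfst hfst₀ hg f'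
  have hdis : μ ⊗ₘ (ρ₀ : Measure (X × E)).condKernel = ρ₀ := by
    rw [← hfst₀, Measure.disintegrate]
  rw [← hdis, ← youngPairing_eq_integral_compProd hg] at hlim'
  exact hlim'.congr fun k => (youngPairing_eq_integral_compProd hg f').symm

theorem main_convergence_general {X E : Type*} [MeasurableSpace X] [StandardBorelSpace X]
    {μ : Measure X} [IsProbabilityMeasure μ] [TopologicalSpace E] [PolishSpace E]
    [MeasurableSpace E] [BorelSpace E] {V : ℕ → X → X → ℝ}
    (hV : ∀ n, Integrable (V n).uncurry (μ.prod μ))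
    (hVbd : ∃ C, ∀ n, ∫ x, ∫ y, |V n x y| ∂μ ∂μ ≤ C) {W : X → X → ℝ}
    (hW : Integrable W.uncurry (μ.prod μ))
    (hcut : Tendsto (fun n => kernelCutNorm μ fun z => V n z.1 z.2 - W z.1 z.2) atTop (𝓝 0))
    {f : E → E → ℝ} (hf : Continuous f.uncurry) (κ : ℕ → Kernel X E) [∀ n, IsMarkovKernel (κ n)]
    {K : Set E} (hK : IsCompact K) (hκK : ∀ n, ∀ᵐ x ∂μ, ∀ᵐ t ∂κ n x, t ∈ K) :
    (∃ φ : ℕ → ℕ, StrictMono φ ∧ ∃ ν : Kernel X E, IsMarkovKernel ν ∧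
      TendstoNarrowly μ (fun k => κ (φ k)) atTop ν) ∧
    ∀ φ : ℕ → ℕ, StrictMono φ → ∀ ν : Kernel X E, IsMarkovKernel ν →
      TendstoNarrowly μ (fun k => κ (φ k)) atTop ν →
      Tendsto
        (fun k => ∫ x, ∫ y, V (φ k) x y * ∫ t, ∫ s, f s t ∂κ (φ k) x ∂κ (φ k) y ∂μ ∂μ) atTop
        (𝓝 (∫ x, ∫ y, W x y * ∫ t, ∫ s, f s t ∂ν x ∂ν y ∂μ ∂μ)) := by
  refine ⟨exists_subseq_tendstoNarrowly hK hκK, fun φ hφ ν _ hν => ?_⟩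
  obtain ⟨C, hC⟩ := hVbd
  have hVC (n : ℕ) : ∫ z, |(V n).uncurry z| ∂μ.prod μ ≤ C := by
    simpa [integral_prod _ (hV n).abs] using hC n
  have hνK := hν.ae_ae_mem hK.isClosed fun k => hκK (φ k)
  have hlim := hν.tendsto_youngPairing (fun k => hV (φ k)) (fun k => hVC (φ k)) hW
    (hcut.comp hφ.tendsto_atTop) hK (fun k => hκK (φ k)) hνK hf
  rw [youngPairing_uncurry_eq_iteratedIntegral hW hf hK hK hνK hνK] at hlim
  exact hlim.congr fun k => youngPairing_uncurry_eq_iteratedIntegral (hV (φ k)) hf hK hK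
    (hκK (φ k)) (hκK (φ k))

/-- Main convergence theorem: for kernels `W_n → W` in cut norm (uniformly bounded in `L¹`),
bounded continuous `f`, and uniformly bounded measurable `u_n`, (a) the Young measures
`δ_{u_n}` have a narrowly convergent subsequence, and (b) along any narrowly convergent
subsequence with limit `ν`, the energies converge to the graphon energy of `ν`. -/
theorem main_convergence
    (Wseq : ℕ → ℝ → ℝ → ℝ)
    (hWseqMeas : ∀ n, Measurable (Function.uncurry (Wseq n)))
    (hWseqNonneg : ∀ n x y, 0 ≤ Wseq n x y)
    (hWseqSymm : ∀ n x y, Wseq n x y = Wseq n y x)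
    (hWseqInt : ∀ n, IntegrableOn (Function.uncurry (Wseq n)) (I01 ×ˢ I01))
    (hWseqBd : ∃ C : ℝ, ∀ n, (∫ x in I01, ∫ y in I01, |Wseq n x y|) ≤ C)
    (W : ℝ → ℝ → ℝ) (hWmeas : Measurable (Function.uncurry W))
    (hWnonneg : ∀ x y, 0 ≤ W x y) (hWsymm : ∀ x y, W x y = W y x)
    (hWint : IntegrableOn (Function.uncurry W) (I01 ×ˢ I01))
    (hcut : Tendsto (fun n => cutNorm (fun x y => Wseq n x y - W x y)) atTop (nhds 0))
    (f : ℝ → ℝ → ℝ) (hfcont : Continuous (Function.uncurry f))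
    (hfbd : ∃ C : ℝ, ∀ a b, |f a b| ≤ C)
    (u : ℕ → ℝ → ℝ) (hu : ∀ n, Measurable (u n))
    (hub : ∃ C : ℝ, ∀ n x, |u n x| ≤ C) :
    (∃ φ : ℕ → ℕ, StrictMono φ ∧ ∃ ν : ℝ → Measure ℝ, IsYoungMeasure ν ∧
      NarrowConv (fun k => deltaYM (u (φ k))) ν) ∧
    (∀ φ : ℕ → ℕ, StrictMono φ → ∀ ν : ℝ → Measure ℝ, IsYoungMeasure ν →
      NarrowConv (fun k => deltaYM (u (φ k))) ν →
      Tendsto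
        (fun k => ∫ x in I01, ∫ y in I01, Wseq (φ k) x y * f (u (φ k) x) (u (φ k) y))
        atTop
        (nhds (∫ x in I01, ∫ y in I01, W x y * ∫ t, (∫ s, f s t ∂(ν x)) ∂(ν y)))) := by
  have : IsProbabilityMeasure (volume.restrict I01) := ⟨by simp [I01]⟩
  have hprod : (volume.restrict I01).prod (volume.restrict I01) =
      (volume : Measure (ℝ × ℝ)).restrict (I01 ×ˢ I01) := Measure.prod_restrict I01 I01
  obtain ⟨C, hC⟩ := hub
  let κ (n : ℕ) : Kernel ℝ ℝ := .deterministic (u n) (hu n)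
  have hsupp (n : ℕ) : ∀ᵐ x ∂volume.restrict I01, ∀ᵐ t ∂κ n x, t ∈ Set.Icc (-C) C :=
    ae_of_all _ fun x => (ae_dirac_iff measurableSet_Icc).2 (abs_le.1 (hC n x))
  obtain ⟨hsubseq, hlimit⟩ := main_convergence_general (hprod ▸ hWseqInt) hWseqBd
    (hprod ▸ hWint) hcut hfcont κ isCompact_Icc hsupp
  constructor
  · obtain ⟨φ, hφ, ν, hν, hlim⟩ := hsubseq
    exact ⟨φ, hφ, ν, ⟨ν.measurable, hν.isProbabilityMeasure⟩, hlim⟩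
  · intro φ hφ ν hν hlim
    simpa only [κ, Kernel.deterministic_apply, Kernel.coe_mk, integral_dirac] using
      hlimit φ hφ ⟨ν, hν.1⟩ ⟨hν.2⟩ hlim
end
end
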